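/- Let K be any field, and let G_13 ⊆ S_8 be the subgroup of order 24 generated by σ_1 = (1,2)(3,4)(5,6)(7,8), σ_2 = (1,3)(2,4)(5,7)(6,8), κ = (1,5)(2,6)(3,7)(4,8), and φ_1 = (2,3,4)(7,6,5). Then the fixed field K(x_1,…,x_8)^{G_13} is K-rational. -/

import Mathlib

noncomputable section

/-- The rational function field `K(x_i : i ∈ I)` over `K`, realized as the fraction field
of the multivariate polynomial ring. -/
abbrev RFF (K : Type) [Field K] (I : Type) := FractionRing (MvPolynomial I K)

/-- The image of the variable `x_i` in the rational function field `K(x_i : i ∈ I)`. -/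
noncomputable def Xvar (K : Type) [Field K] (I : Type) (i : I) : RFF K I :=
  algebraMap (MvPolynomial I K) (RFF K I) (MvPolynomial.X i)

/-- Permutations of the variables as `K`-algebra automorphisms of the polynomial ring. -/
def renameHom (K : Type) [Field K] (I : Type) :
    Equiv.Perm I →* (MvPolynomial I K ≃ₐ[K] MvPolynomial I K) where
  toFun σ := MvPolynomial.renameEquiv K σ
  map_one' := MvPolynomial.renameEquiv_refl K
  map_mul' σ τ := (MvPolynomial.renameEquiv_trans K τ σ).symm

/-- The action of permutations of the variables on `K(x_i : i ∈ I)` by `K`-automorphisms,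
determined by `σ(x_i) = x_{σ(i)}`. -/
noncomputable def permHom (K : Type) [Field K] (I : Type) :
    Equiv.Perm I →* (RFF K I ≃ₐ[K] RFF K I) :=
  (IsFractionRing.fieldEquivOfAlgEquivHom K (RFF K I)).comp (renameHom K I)

/-- The fixed field `K(x_i : i ∈ I)^G` of a group `G` of permutations of the variables. -/
noncomputable def fixedSub (K : Type) [Field K] (I : Type) (G : Subgroup (Equiv.Perm I)) :
    IntermediateField K (RFF K I) :=
  IntermediateField.fixedField (G.map (permHom K I))

/-- An extension `L/K` is `K`-rational if it is purely transcendental over `K`, i.e. generated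
by finitely many algebraically independent elements. -/
def IsRatExt (K : Type) [Field K] (L : Type*) [Field L] [Algebra K L] : Prop :=
  ∃ (n : ℕ) (t : Fin n → L), AlgebraicIndependent K t ∧
    IntermediateField.adjoin K (Set.range t) = ⊤

set_option linter.all false

section General

variable {K F : Type} [Field K] [Field F] [Algebra K F]

/-- `[F : M]` is finite and at most `n`. -/
def DegLe (M : IntermediateField K F) (n : ℕ) : Prop :=
  FiniteDimensional M F ∧ Module.finrank M F ≤ n

theorem DegLe.top_one : DegLe (⊤ : IntermediateField K F) 1 := by
  have h : Module.finrank (⊤ : IntermediateField K F) F = 1 := IntermediateField.finrank_top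
  exact ⟨Module.finite_of_finrank_pos (by omega), h.le⟩

theorem tower_aux (M E F : Type) [Field M] [Field E] [Field F] [Algebra M E] [Algebra E F]
    [Algebra M F] [IsScalarTower M E F] (d n : ℕ) (h1 : FiniteDimensional M E)
    (h2 : FiniteDimensional E F) (hd : Module.finrank M E ≤ d) (hn : Module.finrank E F ≤ n) :
    FiniteDimensional M F ∧ Module.finrank M F ≤ d * n := by
  refine ⟨FiniteDimensional.trans M E F, ?_⟩
  rw [← Module.finrank_mul_finrank M E F]
  exact Nat.mul_le_mul hd hn

/-- One step of the tower: adjoin a root `θ` of a monic polynomial. -/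
theorem DegLe.step (M : IntermediateField K F) (θ : F) (d n : ℕ)
    (p : Polynomial M) (hp : p.Monic) (hd : p.natDegree ≤ d)
    (h0 : Polynomial.aeval θ p = 0)
    (H : ∀ N : IntermediateField K F, M ≤ N → θ ∈ N → DegLe N n) :
    DegLe M (d * n) := by
  have hint : IsIntegral M θ := ⟨p, hp, h0⟩
  let E : IntermediateField M F := IntermediateField.adjoin M {θ}
  have hE : Module.finrank M E ≤ d := by
    rw [IntermediateField.adjoin.finrank hint]
    exact (Polynomial.natDegree_le_of_dvd (minpoly.dvd _ _ h0) hp.ne_zero).trans hd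
  have hfE : FiniteDimensional M E := IntermediateField.adjoin.finiteDimensional hint
  obtain ⟨h1, h2⟩ := H (E.restrictScalars K)
    (fun x hx => E.algebraMap_mem ⟨x, hx⟩)
    (IntermediateField.mem_adjoin_simple_self M θ)
  have h1' : FiniteDimensional E F := h1
  have h2' : Module.finrank E F ≤ n := h2
  exact tower_aux M E F d n hfE h1' hE h2'

theorem DegLe.step2 (M : IntermediateField K F) (θ b c : F) (n : ℕ)
    (hb : b ∈ M) (hc : c ∈ M) (h0 : θ ^ 2 + b * θ + c = 0)
    (H : ∀ N : IntermediateField K F, M ≤ N → θ ∈ N → DegLe N n) :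
    DegLe M (2 * n) := by
  refine DegLe.step M θ 2 n (Polynomial.X ^ 2 + Polynomial.C ⟨b, hb⟩ * Polynomial.X
    + Polynomial.C ⟨c, hc⟩) ?_ ?_ ?_ H
  · monicity!
  · compute_degree
  · simpa [IntermediateField.algebraMap_apply] using h0

theorem DegLe.step3 (M : IntermediateField K F) (θ a b c : F) (n : ℕ)
    (ha : a ∈ M) (hb : b ∈ M) (hc : c ∈ M) (h0 : θ ^ 3 + a * θ ^ 2 + b * θ + c = 0)
    (H : ∀ N : IntermediateField K F, M ≤ N → θ ∈ N → DegLe N n) :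
    DegLe M (3 * n) := by
  refine DegLe.step M θ 3 n (Polynomial.X ^ 3 + Polynomial.C ⟨a, ha⟩ * Polynomial.X ^ 2
    + Polynomial.C ⟨b, hb⟩ * Polynomial.X + Polynomial.C ⟨c, hc⟩) ?_ ?_ ?_ H
  · monicity!
  · compute_degree
  · simpa [IntermediateField.algebraMap_apply] using h0

end General

section Reduction

variable (K : Type) [Field K]

theorem permHom_Xvar (I : Type) (σ : Equiv.Perm I) (i : I) :
    permHom K I σ (Xvar K I i) = Xvar K I (σ i) := by
  simp [permHom, Xvar, renameHom]

theorem permHom_inj (I : Type) : Function.Injective (permHom K I) := by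
  intro σ τ h
  ext i
  have h1 := permHom_Xvar K I σ i
  rw [h, permHom_Xvar] at h1
  exact (MvPolynomial.X_injective (IsFractionRing.injective _ _ h1)).symm

theorem trdeg_RFF : Algebra.trdeg K (RFF K (Fin 8)) = 8 := by
  have : Algebra.IsAlgebraic (MvPolynomial (Fin 8) K) (RFF K (Fin 8)) :=
    IsLocalization.isAlgebraic _ (nonZeroDivisors _)
  have h : IsTranscendenceBasis K (algebraMap (MvPolynomial (Fin 8) K) (RFF K (Fin 8)) ∘
      (MvPolynomial.X : Fin 8 → MvPolynomial (Fin 8) K)) :=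
    (IsTranscendenceBasis.mvPolynomial (Fin 8) K).algebraMap_comp
  have := h.cardinalMk_eq_trdeg
  simpa using this.symm

/-- The group `G₁₃`. -/
abbrev G13 : Subgroup (Equiv.Perm (Fin 8)) := Subgroup.closure
      {Equiv.swap (0 : Fin 8) 1 * Equiv.swap 2 3 * Equiv.swap 4 5 * Equiv.swap 6 7,
       Equiv.swap (0 : Fin 8) 2 * Equiv.swap 1 3 * Equiv.swap 4 6 * Equiv.swap 5 7,
       Equiv.swap (0 : Fin 8) 4 * Equiv.swap 1 5 * Equiv.swap 2 6 * Equiv.swap 3 7,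
       (Equiv.swap (1 : Fin 8) 2 * Equiv.swap 2 3) * (Equiv.swap (6 : Fin 8) 5 * Equiv.swap 5 4)}

/-- Products of powers of the generators. -/
def word (q : Fin 2 × Fin 2 × Fin 2 × Fin 3) : Equiv.Perm (Fin 8) :=
  (Equiv.swap (0 : Fin 8) 1 * Equiv.swap 2 3 * Equiv.swap 4 5 * Equiv.swap 6 7) ^ (q.1 : ℕ) *
  (Equiv.swap (0 : Fin 8) 2 * Equiv.swap 1 3 * Equiv.swap 4 6 * Equiv.swap 5 7) ^ (q.2.1 : ℕ) *
  (Equiv.swap (0 : Fin 8) 4 * Equiv.swap 1 5 * Equiv.swap 2 6 * Equiv.swap 3 7) ^ (q.2.2.1 : ℕ) *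
  ((Equiv.swap (1 : Fin 8) 2 * Equiv.swap 2 3) *
    (Equiv.swap (6 : Fin 8) 5 * Equiv.swap 5 4)) ^ (q.2.2.2 : ℕ)

theorem word_mem (q) : word q ∈ G13 := by
  unfold word
  refine mul_mem (mul_mem (mul_mem ?_ ?_) ?_) ?_ <;>
  · refine pow_mem (Subgroup.subset_closure ?_) _
    simp

set_option maxRecDepth 100000 in
theorem word_inj : Function.Injective word := by
  have h : ∀ a b, (word a 0, word a 1) = (word b 0, word b 1) → a = b := by
    decide +kernel
  intro a b hab
  exact h a b (by rw [hab])

theorem card_G13 : 24 ≤ Nat.card G13 := by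
  have h := Nat.card_le_card_of_injective (fun q => (⟨word q, word_mem q⟩ : G13))
    (fun a b hab => word_inj (congrArg Subtype.val hab))
  simpa using h

open scoped IntermediateField.algebraAdjoinAdjoin in
theorem reduction (t : Fin 8 → RFF K (Fin 8))
    (h1 : ∀ i, permHom K (Fin 8)
      (Equiv.swap (0 : Fin 8) 1 * Equiv.swap 2 3 * Equiv.swap 4 5 * Equiv.swap 6 7) (t i) = t i)
    (h2 : ∀ i, permHom K (Fin 8)
      (Equiv.swap (0 : Fin 8) 2 * Equiv.swap 1 3 * Equiv.swap 4 6 * Equiv.swap 5 7) (t i) = t i)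
    (h3 : ∀ i, permHom K (Fin 8)
      (Equiv.swap (0 : Fin 8) 4 * Equiv.swap 1 5 * Equiv.swap 2 6 * Equiv.swap 3 7) (t i) = t i)
    (h4 : ∀ i, permHom K (Fin 8) ((Equiv.swap (1 : Fin 8) 2 * Equiv.swap 2 3) *
      (Equiv.swap (6 : Fin 8) 5 * Equiv.swap 5 4)) (t i) = t i)
    (hD : DegLe (IntermediateField.adjoin K (Set.range t)) 24) :
    IsRatExt K ↥(fixedSub K (Fin 8) G13) := by
  obtain ⟨hfin, hdeg⟩ := hD
  have hmem : ∀ i, t i ∈ fixedSub K (Fin 8) G13 := by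
    intro i
    unfold fixedSub
    rw [IntermediateField.mem_fixedField_iff]
    rintro _ ⟨g, hg, rfl⟩
    induction hg using Subgroup.closure_induction with
    | mem x hx =>
      rcases hx with rfl | rfl | rfl | rfl
      · exact h1 i
      · exact h2 i
      · exact h3 i
      · exact h4 i
    | one => simp
    | mul x y _ _ hx hy =>
      rw [map_mul, AlgEquiv.mul_apply]
      erw [hy, hx]
    | inv x _ hx =>
      rw [map_inv]
      change (permHom K (Fin 8) x).symm (t i) = t i
      rw [AlgEquiv.symm_apply_eq]
      exact hx.symm
  have hle : IntermediateField.adjoin K (Set.range t) ≤ fixedSub K (Fin 8) G13 := by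
    rw [IntermediateField.adjoin_le_iff]
    rintro _ ⟨i, rfl⟩
    exact hmem i
  have hcard : 24 ≤ Module.finrank (fixedSub K (Fin 8) G13) (RFF K (Fin 8)) := by
    let H := G13.map (permHom K (Fin 8))
    have e : G13 ≃* H := G13.equivMapOfInjective _ (permHom_inj K (Fin 8))
    have : Finite H := Finite.of_equiv _ e.toEquiv
    have : Fintype H := Fintype.ofFinite H
    have h : Module.finrank (fixedSub K (Fin 8) G13) (RFF K (Fin 8)) = Fintype.card H :=
      FixedPoints.finrank_eq_card H (RFF K (Fin 8))
    rw [h, ← Nat.card_eq_fintype_card, ← Nat.card_congr e.toEquiv]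
    exact card_G13
  have heq := IntermediateField.eq_of_le_of_finrank_le' hle (hdeg.trans hcard)
  have halg : Algebra.IsAlgebraic (Algebra.adjoin K (Set.range t)) (RFF K (Fin 8)) := by
    have h : Algebra.IsAlgebraic (IntermediateField.adjoin K (Set.range t)) (RFF K (Fin 8)) :=
      Algebra.IsAlgebraic.of_finite _ _
    exact (IsFractionRing.comap_isAlgebraic_iff (A := Algebra.adjoin K (Set.range t))
      (K := IntermediateField.adjoin K (Set.range t)) (C := RFF K (Fin 8))).mpr h
  have hind : AlgebraicIndependent K t :=
    (Algebra.IsAlgebraic.isTranscendenceBasis_of_le_trdeg_of_finite K t (by rw [trdeg_RFF]; simp)).1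
  refine ⟨8, fun i => ⟨t i, hmem i⟩, ?_, ?_⟩
  · exact (AlgHom.algebraicIndependent_iff (fixedSub K (Fin 8) G13).val
      Subtype.val_injective).mp hind
  · apply IntermediateField.lift_injective
    rw [IntermediateField.lift_adjoin, IntermediateField.lift_top, ← Set.range_comp]
    exact heq

end Reduction

section Core

variable {K F : Type} [Field K] [Field F] [Algebra K F]

/-- The degree-three step: the cyclic permutation of three elements. -/
theorem cyc3_step (M : IntermediateField K F) (n : ℕ) (a b c u v : F)
    (hab : a ≠ b) (hac : a ≠ c)
    (hQ : a ^ 2 + b ^ 2 + c ^ 2 - a * b - b * c - c * a ≠ 0)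
    (hu : u = (a * b ^ 2 + b * c ^ 2 + c * a ^ 2 - 3 * a * b * c) /
      (a ^ 2 + b ^ 2 + c ^ 2 - a * b - b * c - c * a))
    (hv : v = (a ^ 2 * b + b ^ 2 * c + c ^ 2 * a - 3 * a * b * c) /
      (a ^ 2 + b ^ 2 + c ^ 2 - a * b - b * c - c * a))
    (hsM : a + b + c ∈ M) (huM : u ∈ M) (hvM : v ∈ M)
    (H : ∀ N : IntermediateField K F, M ≤ N → a ∈ N → b ∈ N → c ∈ N → DegLe N n) :
    DegLe M (3 * n) := by
  obtain ⟨q, hq⟩ : ∃ q, q = a ^ 2 + b ^ 2 + c ^ 2 - a * b - b * c - c * a := ⟨_, rfl⟩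
  rw [← hq] at hQ hu hv
  have e2 : a * b + b * c + c * a = (a + b + c) * (u + v) - 3 * (u ^ 2 - u * v + v ^ 2) := by
    rw [hu, hv]; field_simp; rw [hq]; ring
  have e3 : a * b * c = (a + b + c) * (u * v) - (u ^ 3 + v ^ 3) := by
    rw [hu, hv]; field_simp; rw [hq]; ring
  have m2 : a * b + b * c + c * a ∈ M := by
    rw [e2]
    (repeat first | assumption | exact ofNat_mem _ _ | apply add_mem | apply sub_mem | apply mul_mem | apply div_mem | apply pow_mem | apply neg_mem | exact one_mem _)
  have m3 : a * b * c ∈ M := by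
    rw [e3]
    (repeat first | assumption | exact ofNat_mem _ _ | apply add_mem | apply sub_mem | apply mul_mem | apply div_mem | apply pow_mem | apply neg_mem | exact one_mem _)
  have eP : a ^ 2 * b + b ^ 2 * c + c ^ 2 * a =
      v * ((a + b + c) ^ 2 - 3 * (a * b + b * c + c * a)) + 3 * (a * b * c) := by
    rw [hv]; field_simp; rw [hq]; ring
  have mP : a ^ 2 * b + b ^ 2 * c + c ^ 2 * a ∈ M := by
    rw [eP]
    (repeat first | assumption | exact ofNat_mem _ _ | apply add_mem | apply sub_mem | apply mul_mem | apply div_mem | apply pow_mem | apply neg_mem | exact one_mem _)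
  refine DegLe.step3 M a (-(a + b + c)) (a * b + b * c + c * a) (-(a * b * c)) n
    (neg_mem hsM) m2 (neg_mem m3) (by ring) ?_
  intro N hMN ha
  have hs := hMN hsM
  have h2 := hMN m2
  have h3 := hMN m3
  have hP := hMN mP
  have hbc : b + c ∈ N := by
    have : b + c = (a + b + c) - a := by ring
    rw [this]
    (repeat first | assumption | exact ofNat_mem _ _ | apply add_mem | apply sub_mem | apply mul_mem | apply div_mem | apply pow_mem | apply neg_mem | exact one_mem _)
  have hbc' : b * c ∈ N := by
    have : b * c = (a * b + b * c + c * a) - a * (b + c) := by ring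
    rw [this]
    (repeat first | assumption | exact ofNat_mem _ _ | apply add_mem | apply sub_mem | apply mul_mem | apply div_mem | apply pow_mem | apply neg_mem | exact one_mem _)
  have hb : b ∈ N := by
    have hne : (a - b) * (a - c) ≠ 0 := mul_ne_zero (sub_ne_zero.mpr hab) (sub_ne_zero.mpr hac)
    have : b = ((a ^ 2 * b + b ^ 2 * c + c ^ 2 * a) - a * (b + c) ^ 2 + a * (b * c)) /
        (b * c + a ^ 2 - a * (b + c)) := by
      have hne' : b * c + a ^ 2 - a * (b + c) ≠ 0 := by
        convert hne using 1; ring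
      rw [eq_div_iff hne']; ring
    rw [this]
    (repeat first | assumption | exact ofNat_mem _ _ | apply add_mem | apply sub_mem | apply mul_mem | apply div_mem | apply pow_mem | apply neg_mem | exact one_mem _)
  have hc : c ∈ N := by
    have : c = (b + c) - b := by ring
    rw [this]
    (repeat first | assumption | exact ofNat_mem _ _ | apply add_mem | apply sub_mem | apply mul_mem | apply div_mem | apply pow_mem | apply neg_mem | exact one_mem _)
  exact H N hMN ha hb hc

/-- The degree bound in characteristic different from two. -/
theorem core_ne2 (M : IntermediateField K F) (x0 x1 x2 x3 y0 y1 y2 y3 : F)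
    (hgen : ∀ N : IntermediateField K F, x0 ∈ N → x1 ∈ N → x2 ∈ N → x3 ∈ N →
      y0 ∈ N → y1 ∈ N → y2 ∈ N → y3 ∈ N → N = ⊤)
    (two : (2 : F) ≠ 0) (T S f1 f2 f3 g1 g2 g3 a b c u v : F)
    (hT : T = (x0 + y0) + (x1 + y1) + (x2 + y2) + (x3 + y3))
    (hf1 : f1 = (x0 + y0) + (x1 + y1) - (x2 + y2) - (x3 + y3))
    (hf2 : f2 = (x0 + y0) - (x1 + y1) + (x2 + y2) - (x3 + y3))
    (hf3 : f3 = (x0 + y0) - (x1 + y1) - (x2 + y2) + (x3 + y3))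
    (hS : S = (x0 - y0) + (x1 - y1) + (x2 - y2) + (x3 - y3))
    (hg1 : g1 = (x0 - y0) + (x1 - y1) - (x2 - y2) - (x3 - y3))
    (hg2 : g2 = (x0 - y0) - (x1 - y1) + (x2 - y2) - (x3 - y3))
    (hg3 : g3 = (x0 - y0) - (x1 - y1) - (x2 - y2) + (x3 - y3))
    (S0 : S ≠ 0) (g10 : g1 ≠ 0) (g20 : g2 ≠ 0) (g30 : g3 ≠ 0)
    (ha : a = g2 * g3 / (g1 * S)) (hb : b = g3 * g1 / (g2 * S)) (hc : c = g1 * g2 / (g3 * S))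
    (hab : a ≠ b) (hac : a ≠ c) (hbc : b ≠ c)
    (hQ : a ^ 2 + b ^ 2 + c ^ 2 - a * b - b * c - c * a ≠ 0)
    (hu : u = (a * b ^ 2 + b * c ^ 2 + c * a ^ 2 - 3 * a * b * c) /
      (a ^ 2 + b ^ 2 + c ^ 2 - a * b - b * c - c * a))
    (hv : v = (a ^ 2 * b + b ^ 2 * c + c ^ 2 * a - 3 * a * b * c) /
      (a ^ 2 + b ^ 2 + c ^ 2 - a * b - b * c - c * a))
    (mT : T ∈ M) (mS : S ^ 2 ∈ M) (ms : a + b + c ∈ M) (mu : u ∈ M) (mv : v ∈ M)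
    (mW0 : S * f1 * g1 + S * f2 * g2 + S * f3 * g3 ∈ M)
    (mW1 : a * (S * f1 * g1) + b * (S * f2 * g2) + c * (S * f3 * g3) ∈ M)
    (mW2 : a ^ 2 * (S * f1 * g1) + b ^ 2 * (S * f2 * g2) + c ^ 2 * (S * f3 * g3) ∈ M) :
    DegLe M 24 := by
  refine cyc3_step M 8 a b c u v hab hac hQ hu hv ms mu mv ?_
  intro N1 h1 ma mb mc
  refine DegLe.step2 N1 S 0 (-(S ^ 2)) 4 (zero_mem _) (neg_mem (h1 mS)) (by ring) ?_
  intro N2 h2 mS'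
  have ga : g1 ^ 2 = b * c * S ^ 2 := by rw [hb, hc]; field_simp
  have gb : g2 ^ 2 = a * c * S ^ 2 := by rw [ha, hc]; field_simp
  refine DegLe.step2 N2 g1 0 (-(b * c * S ^ 2)) 2 (zero_mem _)
    (neg_mem (mul_mem (mul_mem (h2 mb) (h2 mc)) (pow_mem mS' 2))) (by rw [ga]; ring) ?_
  intro N3 h3 mg1
  refine DegLe.step2 N3 g2 0 (-(a * c * S ^ 2)) 1 (zero_mem _)
    (neg_mem (mul_mem (mul_mem (h3 (h2 ma)) (h3 (h2 mc))) (pow_mem (h3 mS') 2)))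
    (by rw [gb]; ring) ?_
  intro N h4 mg2
  replace mg1 := h4 mg1
  have le : N1 ≤ N := h2.trans (h3.trans h4)
  replace mS := h4 (h3 mS')
  replace ma := le ma
  replace mb := le mb
  replace mc := le mc
  replace mT := le (h1 mT)
  replace mW0 := le (h1 mW0)
  replace mW1 := le (h1 mW1)
  replace mW2 := le (h1 mW2)
  have hab' := sub_ne_zero.mpr hab
  have hac' := sub_ne_zero.mpr hac
  have hbc' := sub_ne_zero.mpr hbc
  have mg3 : g3 ∈ N := by
    have : g3 = a * g1 * S / g2 := by rw [ha]; field_simp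
    rw [this]
    (repeat first | assumption | exact ofNat_mem _ _ | apply add_mem | apply sub_mem | apply mul_mem | apply div_mem | apply pow_mem | apply neg_mem | exact one_mem _)
  set W0 := S * f1 * g1 + S * f2 * g2 + S * f3 * g3 with hW0
  set W1 := a * (S * f1 * g1) + b * (S * f2 * g2) + c * (S * f3 * g3) with hW1
  set W2 := a ^ 2 * (S * f1 * g1) + b ^ 2 * (S * f2 * g2) + c ^ 2 * (S * f3 * g3) with hW2
  have mf1 : f1 ∈ N := by
    have : f1 = (W2 - (b + c) * W1 + b * c * W0) / ((a - b) * (a - c) * (S * g1)) := by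
      rw [eq_div_iff (by simp [S0, g10, g20, g30, hab', hac', hbc', two]), hW0, hW1, hW2]; ring
    rw [this]
    (repeat first | assumption | exact ofNat_mem _ _ | apply add_mem | apply sub_mem | apply mul_mem | apply div_mem | apply pow_mem | apply neg_mem | exact one_mem _)
  have mf2 : f2 ∈ N := by
    have : f2 = (W2 - (a + c) * W1 + a * c * W0) / ((a - b) * (b - c) * (S * g2)) * (-1) := by
      rw [div_mul_eq_mul_div, eq_div_iff (by simp [S0, g10, g20, g30, hab', hac', hbc', two]), hW0, hW1, hW2]; ring
    rw [this]
    (repeat first | assumption | exact ofNat_mem _ _ | apply add_mem | apply sub_mem | apply mul_mem | apply div_mem | apply pow_mem | apply neg_mem | exact one_mem _)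
  have mf3 : f3 ∈ N := by
    have : f3 = (W2 - (a + b) * W1 + a * b * W0) / ((a - c) * (b - c) * (S * g3)) := by
      rw [eq_div_iff (by simp [S0, g10, g20, g30, hab', hac', hbc', two]), hW0, hW1, hW2]; ring
    rw [this]
    (repeat first | assumption | exact ofNat_mem _ _ | apply add_mem | apply sub_mem | apply mul_mem | apply div_mem | apply pow_mem | apply neg_mem | exact one_mem _)
  clear_value W0 W1 W2
  have e : (8 : F) ≠ 0 := by
    have : (8 : F) = 2 * 2 * 2 := by norm_num
    rw [this]; simp [S0, g10, g20, g30, hab', hac', hbc', two]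
  have key : N = ⊤ := by
    apply hgen
    · have : x0 = ((T + f1 + f2 + f3) + (S + g1 + g2 + g3)) / 8 := by
        rw [eq_div_iff e, hT, hS, hf1, hf2, hf3, hg1, hg2, hg3]; ring
      rw [this]
      (repeat first | assumption | exact ofNat_mem _ _ | apply add_mem | apply sub_mem | apply mul_mem | apply div_mem | apply pow_mem | apply neg_mem | exact one_mem _)
    · have : x1 = ((T + f1 - f2 - f3) + (S + g1 - g2 - g3)) / 8 := by
        rw [eq_div_iff e, hT, hS, hf1, hf2, hf3, hg1, hg2, hg3]; ring
      rw [this]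
      (repeat first | assumption | exact ofNat_mem _ _ | apply add_mem | apply sub_mem | apply mul_mem | apply div_mem | apply pow_mem | apply neg_mem | exact one_mem _)
    · have : x2 = ((T - f1 + f2 - f3) + (S - g1 + g2 - g3)) / 8 := by
        rw [eq_div_iff e, hT, hS, hf1, hf2, hf3, hg1, hg2, hg3]; ring
      rw [this]
      (repeat first | assumption | exact ofNat_mem _ _ | apply add_mem | apply sub_mem | apply mul_mem | apply div_mem | apply pow_mem | apply neg_mem | exact one_mem _)
    · have : x3 = ((T - f1 - f2 + f3) + (S - g1 - g2 + g3)) / 8 := by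
        rw [eq_div_iff e, hT, hS, hf1, hf2, hf3, hg1, hg2, hg3]; ring
      rw [this]
      (repeat first | assumption | exact ofNat_mem _ _ | apply add_mem | apply sub_mem | apply mul_mem | apply div_mem | apply pow_mem | apply neg_mem | exact one_mem _)
    · have : y0 = ((T + f1 + f2 + f3) - (S + g1 + g2 + g3)) / 8 := by
        rw [eq_div_iff e, hT, hS, hf1, hf2, hf3, hg1, hg2, hg3]; ring
      rw [this]
      (repeat first | assumption | exact ofNat_mem _ _ | apply add_mem | apply sub_mem | apply mul_mem | apply div_mem | apply pow_mem | apply neg_mem | exact one_mem _)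
    · have : y1 = ((T + f1 - f2 - f3) - (S + g1 - g2 - g3)) / 8 := by
        rw [eq_div_iff e, hT, hS, hf1, hf2, hf3, hg1, hg2, hg3]; ring
      rw [this]
      (repeat first | assumption | exact ofNat_mem _ _ | apply add_mem | apply sub_mem | apply mul_mem | apply div_mem | apply pow_mem | apply neg_mem | exact one_mem _)
    · have : y2 = ((T - f1 + f2 - f3) - (S - g1 + g2 - g3)) / 8 := by
        rw [eq_div_iff e, hT, hS, hf1, hf2, hf3, hg1, hg2, hg3]; ring
      rw [this]
      (repeat first | assumption | exact ofNat_mem _ _ | apply add_mem | apply sub_mem | apply mul_mem | apply div_mem | apply pow_mem | apply neg_mem | exact one_mem _)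
    · have : y3 = ((T - f1 - f2 + f3) - (S - g1 - g2 + g3)) / 8 := by
        rw [eq_div_iff e, hT, hS, hf1, hf2, hf3, hg1, hg2, hg3]; ring
      rw [this]
      (repeat first | assumption | exact ofNat_mem _ _ | apply add_mem | apply sub_mem | apply mul_mem | apply div_mem | apply pow_mem | apply neg_mem | exact one_mem _)
  rw [key]
  exact DegLe.top_one

end Core

section CoreTwo

variable {K F : Type} [Field K] [Field F] [Algebra K F]

/-- Solving a Vandermonde system inside a subfield. -/
theorem vandermonde_mem (N : IntermediateField K F) (s0 s1 s2 s3 n0 n1 n2 n3 : F)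
    (h01 : n0 ≠ n1) (h02 : n0 ≠ n2) (h03 : n0 ≠ n3)
    (m0 : n0 ∈ N) (m1 : n1 ∈ N) (m2 : n2 ∈ N) (m3 : n3 ∈ N)
    (p0 : s0 + s1 + s2 + s3 ∈ N)
    (p1 : s0 * n0 + s1 * n1 + s2 * n2 + s3 * n3 ∈ N)
    (p2 : s0 * n0 ^ 2 + s1 * n1 ^ 2 + s2 * n2 ^ 2 + s3 * n3 ^ 2 ∈ N)
    (p3 : s0 * n0 ^ 3 + s1 * n1 ^ 3 + s2 * n2 ^ 3 + s3 * n3 ^ 3 ∈ N) : s0 ∈ N := by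
  have h01' := sub_ne_zero.mpr h01
  have h02' := sub_ne_zero.mpr h02
  have h03' := sub_ne_zero.mpr h03
  have : s0 = ((s0 * n0 ^ 3 + s1 * n1 ^ 3 + s2 * n2 ^ 3 + s3 * n3 ^ 3)
      - (n1 + n2 + n3) * (s0 * n0 ^ 2 + s1 * n1 ^ 2 + s2 * n2 ^ 2 + s3 * n3 ^ 2)
      + (n1 * n2 + n1 * n3 + n2 * n3) * (s0 * n0 + s1 * n1 + s2 * n2 + s3 * n3)
      - n1 * n2 * n3 * (s0 + s1 + s2 + s3)) / ((n0 - n1) * (n0 - n2) * (n0 - n3)) := by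
    rw [eq_div_iff (mul_ne_zero (mul_ne_zero h01' h02') h03')]; ring
  rw [this]
  (repeat first | assumption | exact ofNat_mem _ _ | apply add_mem | apply sub_mem | apply mul_mem | apply div_mem | apply pow_mem | apply neg_mem | exact one_mem _)

/-- The degree bound in characteristic two. -/
theorem core_two (M : IntermediateField K F) (x0 x1 x2 x3 y0 y1 y2 y3 : F)
    (hgen : ∀ N : IntermediateField K F, x0 ∈ N → x1 ∈ N → x2 ∈ N → x3 ∈ N →
      y0 ∈ N → y1 ∈ N → y2 ∈ N → y3 ∈ N → N = ⊤)
    (two : (2 : F) = 0)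
    (s0 s1 s2 s3 z0 z1 z2 z3 n0 n1 n2 n3 e a1 a2 a3 A1 A2 c0 c1 c2 c3 T r q : F)
    (hs0 : s0 = x0 + y0) (hs1 : s1 = x1 + y1) (hs2 : s2 = x2 + y2) (hs3 : s3 = x3 + y3)
    (s00 : s0 ≠ 0) (s10 : s1 ≠ 0) (s20 : s2 ≠ 0) (s30 : s3 ≠ 0)
    (hz0 : z0 = x0 / s0) (hz1 : z1 = x1 / s1) (hz2 : z2 = x2 / s2) (hz3 : z3 = x3 / s3)
    (hn0 : n0 = z0 * (1 + z0)) (hn1 : n1 = z1 * (1 + z1))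
    (hn2 : n2 = z2 * (1 + z2)) (hn3 : n3 = z3 * (1 + z3))
    (n01 : n0 ≠ n1) (n02 : n0 ≠ n2) (n03 : n0 ≠ n3) (n12 : n1 ≠ n2) (n13 : n1 ≠ n3)
    (n23 : n2 ≠ n3)
    (he : e = z0 + z1 + z2 + z3) (e0 : e ≠ 0)
    (ha1 : a1 = (z0 - z1) / e) (ha2 : a2 = (z0 - z2) / e) (ha3 : a3 = (z0 - z3) / e)
    (hA1 : A1 = a1 ^ 2 + a1) (hA2 : A2 = a2 ^ 2 + a2)
    (A10 : A1 ≠ 0) (A20 : A2 ≠ 0) (A30 : A1 + A2 ≠ 0) (hQ : A1 ^ 2 + A1 * A2 + A2 ^ 2 ≠ 0)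
    (hc0 : c0 = a1 * a2 * a3) (hc1 : c1 = a1 * (a2 + 1) * (a3 + 1))
    (hc2 : c2 = (a1 + 1) * a2 * (a3 + 1)) (hc3 : c3 = (a1 + 1) * (a2 + 1) * a3)
    (hT : T = z0 * c0 + z1 * c1 + z2 * c2 + z3 * c3)
    (hr : r = (A1 ^ 3 + A1 ^ 2 * A2 + A2 ^ 3) / (A1 * A2 * (A1 + A2)))
    (hq : q = A1 * A2 * (A1 + A2) / (A1 ^ 2 + A1 * A2 + A2 ^ 2))
    (p0 : s0 + s1 + s2 + s3 ∈ M)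
    (p1 : s0 * n0 + s1 * n1 + s2 * n2 + s3 * n3 ∈ M)
    (p2 : s0 * n0 ^ 2 + s1 * n1 ^ 2 + s2 * n2 ^ 2 + s3 * n3 ^ 2 ∈ M)
    (p3 : s0 * n0 ^ 3 + s1 * n1 ^ 3 + s2 * n2 ^ 3 + s3 * n3 ^ 3 ∈ M)
    (mT2 : T ^ 2 + T ∈ M) (me : e ∈ M) (mr : r ∈ M) (mq : q ∈ M) :
    DegLe M 24 := by
  refine DegLe.step3 M (A1 / A2) (1 - r) (-r) 1 8 (sub_mem (one_mem _) mr) (neg_mem mr)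
    (one_mem _) (by rw [hr]; field_simp; ring) ?_
  intro N1 h1 mθ
  have hA2' : A2 = q * ((A1 / A2) ^ 2 + A1 / A2 + 1) / ((A1 / A2) ^ 2 + A1 / A2) := by
    have e1 : (A1 / A2) ^ 2 + A1 / A2 + 1 = (A1 ^ 2 + A1 * A2 + A2 ^ 2) / A2 ^ 2 := by
      field_simp
    have e2 : (A1 / A2) ^ 2 + A1 / A2 = A1 * (A1 + A2) / A2 ^ 2 := by
      field_simp
    rw [e1, e2, hq]
    generalize A1 ^ 2 + A1 * A2 + A2 ^ 2 = Q at *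
    generalize A1 + A2 = B at *
    field_simp
  have mA2 : A2 ∈ N1 := by
    have := h1 mq
    rw [hA2']
    (repeat first | assumption | exact ofNat_mem _ _ | apply add_mem | apply sub_mem | apply mul_mem | apply div_mem | apply pow_mem | apply neg_mem | exact one_mem _)
  have mA1 : A1 ∈ N1 := by
    have : A1 = A1 / A2 * A2 := by field_simp
    rw [this]
    (repeat first | assumption | exact ofNat_mem _ _ | apply add_mem | apply sub_mem | apply mul_mem | apply div_mem | apply pow_mem | apply neg_mem | exact one_mem _)
  refine DegLe.step2 N1 a1 1 (-A1) 4 (one_mem _) (neg_mem mA1) (by rw [hA1]; ring) ?_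
  intro N2 h2 ma1
  refine DegLe.step2 N2 a2 1 (-A2) 2 (one_mem _) (neg_mem (h2 mA2)) (by rw [hA2]; ring) ?_
  intro N3 h3 ma2
  refine DegLe.step2 N3 T 1 (-(T ^ 2 + T)) 1 (one_mem _) (neg_mem (h3 (h2 (h1 mT2)))) (by ring) ?_
  intro N h4 mT
  have le : M ≤ N := h1.trans (h2.trans (h3.trans h4))
  replace ma1 := h4 (h3 ma1)
  replace ma2 := h4 ma2
  replace p0 := le p0
  replace p1 := le p1
  replace p2 := le p2
  replace p3 := le p3
  replace me := le me
  clear mT2 mr mq mA1 mA2 mθ hA2' hr hq hQ A10 A20 A30 hA1 hA2 h1 h2 h3 h4 le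
  have hsum : a1 + a2 + a3 = 1 := by
    rw [ha1, ha2, ha3, ← add_div, ← add_div, div_eq_one_iff_eq e0, he]
    linear_combination (z0 - z1 - z2 - z3) * two
  have ma3 : a3 ∈ N := by
    have : a3 = 1 - a1 - a2 := by rw [← hsum]; ring
    rw [this]
    (repeat first | assumption | exact ofNat_mem _ _ | apply add_mem | apply sub_mem | apply mul_mem | apply div_mem | apply pow_mem | apply neg_mem | exact one_mem _)
  have mc1 : c1 ∈ N := by
    rw [hc1]
    (repeat first | assumption | exact ofNat_mem _ _ | apply add_mem | apply sub_mem | apply mul_mem | apply div_mem | apply pow_mem | apply neg_mem | exact one_mem _)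
  have mc2 : c2 ∈ N := by
    rw [hc2]
    (repeat first | assumption | exact ofNat_mem _ _ | apply add_mem | apply sub_mem | apply mul_mem | apply div_mem | apply pow_mem | apply neg_mem | exact one_mem _)
  have mc3 : c3 ∈ N := by
    rw [hc3]
    (repeat first | assumption | exact ofNat_mem _ _ | apply add_mem | apply sub_mem | apply mul_mem | apply div_mem | apply pow_mem | apply neg_mem | exact one_mem _)
  have hcs : c0 + c1 + c2 + c3 = 1 := by
    rw [hc0, hc1, hc2, hc3]
    linear_combination (2 * a1 * a2 * a3 + a1 * a2 + a2 * a3 + a3 * a1) * two + hsum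
  have ez1 : z1 = z0 - e * a1 := by rw [ha1]; field_simp; ring
  have ez2 : z2 = z0 - e * a2 := by rw [ha2]; field_simp; ring
  have ez3 : z3 = z0 - e * a3 := by rw [ha3]; field_simp; ring
  have mz0 : z0 ∈ N := by
    have : z0 = T + e * (a1 * c1 + a2 * c2 + a3 * c3) := by
      rw [hT]
      linear_combination (-z0) * hcs - c1 * ez1 - c2 * ez2 - c3 * ez3
    rw [this]
    (repeat first | assumption | exact ofNat_mem _ _ | apply add_mem | apply sub_mem | apply mul_mem | apply div_mem | apply pow_mem | apply neg_mem | exact one_mem _)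
  have mz1 : z1 ∈ N := by
    rw [ez1]
    (repeat first | assumption | exact ofNat_mem _ _ | apply add_mem | apply sub_mem | apply mul_mem | apply div_mem | apply pow_mem | apply neg_mem | exact one_mem _)
  have mz2 : z2 ∈ N := by
    rw [ez2]
    (repeat first | assumption | exact ofNat_mem _ _ | apply add_mem | apply sub_mem | apply mul_mem | apply div_mem | apply pow_mem | apply neg_mem | exact one_mem _)
  have mz3 : z3 ∈ N := by
    rw [ez3]
    (repeat first | assumption | exact ofNat_mem _ _ | apply add_mem | apply sub_mem | apply mul_mem | apply div_mem | apply pow_mem | apply neg_mem | exact one_mem _)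
  clear ez1 ez2 ez3
  have mn0 : n0 ∈ N := by
    rw [hn0]
    (repeat first | assumption | exact ofNat_mem _ _ | apply add_mem | apply sub_mem | apply mul_mem | apply div_mem | apply pow_mem | apply neg_mem | exact one_mem _)
  have mn1 : n1 ∈ N := by
    rw [hn1]
    (repeat first | assumption | exact ofNat_mem _ _ | apply add_mem | apply sub_mem | apply mul_mem | apply div_mem | apply pow_mem | apply neg_mem | exact one_mem _)
  have mn2 : n2 ∈ N := by
    rw [hn2]
    (repeat first | assumption | exact ofNat_mem _ _ | apply add_mem | apply sub_mem | apply mul_mem | apply div_mem | apply pow_mem | apply neg_mem | exact one_mem _)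
  have mn3 : n3 ∈ N := by
    rw [hn3]
    (repeat first | assumption | exact ofNat_mem _ _ | apply add_mem | apply sub_mem | apply mul_mem | apply div_mem | apply pow_mem | apply neg_mem | exact one_mem _)
  have ms0 : s0 ∈ N := vandermonde_mem N s0 s1 s2 s3 n0 n1 n2 n3 n01 n02 n03 mn0 mn1 mn2 mn3
    p0 p1 p2 p3
  have ms1 : s1 ∈ N := vandermonde_mem N s1 s0 s2 s3 n1 n0 n2 n3 n01.symm n12 n13 mn1 mn0 mn2 mn3
    (by convert p0 using 1; ring) (by convert p1 using 1; ring)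
    (by convert p2 using 1; ring) (by convert p3 using 1; ring)
  have ms2 : s2 ∈ N := vandermonde_mem N s2 s0 s1 s3 n2 n0 n1 n3 n02.symm n12.symm n23
    mn2 mn0 mn1 mn3
    (by convert p0 using 1; ring) (by convert p1 using 1; ring)
    (by convert p2 using 1; ring) (by convert p3 using 1; ring)
  have ms3 : s3 ∈ N := vandermonde_mem N s3 s0 s1 s2 n3 n0 n1 n2 n03.symm n13.symm n23.symm
    mn3 mn0 mn1 mn2
    (by convert p0 using 1; ring) (by convert p1 using 1; ring)
    (by convert p2 using 1; ring) (by convert p3 using 1; ring)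
  have mx0 : x0 ∈ N := by
    have : x0 = z0 * s0 := by rw [hz0]; field_simp
    rw [this]
    (repeat first | assumption | exact ofNat_mem _ _ | apply add_mem | apply sub_mem | apply mul_mem | apply div_mem | apply pow_mem | apply neg_mem | exact one_mem _)
  have mx1 : x1 ∈ N := by
    have : x1 = z1 * s1 := by rw [hz1]; field_simp
    rw [this]
    (repeat first | assumption | exact ofNat_mem _ _ | apply add_mem | apply sub_mem | apply mul_mem | apply div_mem | apply pow_mem | apply neg_mem | exact one_mem _)
  have mx2 : x2 ∈ N := by
    have : x2 = z2 * s2 := by rw [hz2]; field_simp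
    rw [this]
    (repeat first | assumption | exact ofNat_mem _ _ | apply add_mem | apply sub_mem | apply mul_mem | apply div_mem | apply pow_mem | apply neg_mem | exact one_mem _)
  have mx3 : x3 ∈ N := by
    have : x3 = z3 * s3 := by rw [hz3]; field_simp
    rw [this]
    (repeat first | assumption | exact ofNat_mem _ _ | apply add_mem | apply sub_mem | apply mul_mem | apply div_mem | apply pow_mem | apply neg_mem | exact one_mem _)
  have my0 : y0 ∈ N := by
    have : y0 = s0 - x0 := by rw [hs0]; ring
    rw [this]
    (repeat first | assumption | exact ofNat_mem _ _ | apply add_mem | apply sub_mem | apply mul_mem | apply div_mem | apply pow_mem | apply neg_mem | exact one_mem _)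
  have my1 : y1 ∈ N := by
    have : y1 = s1 - x1 := by rw [hs1]; ring
    rw [this]
    (repeat first | assumption | exact ofNat_mem _ _ | apply add_mem | apply sub_mem | apply mul_mem | apply div_mem | apply pow_mem | apply neg_mem | exact one_mem _)
  have my2 : y2 ∈ N := by
    have : y2 = s2 - x2 := by rw [hs2]; ring
    rw [this]
    (repeat first | assumption | exact ofNat_mem _ _ | apply add_mem | apply sub_mem | apply mul_mem | apply div_mem | apply pow_mem | apply neg_mem | exact one_mem _)
  have my3 : y3 ∈ N := by
    have : y3 = s3 - x3 := by rw [hs3]; ring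
    rw [this]
    (repeat first | assumption | exact ofNat_mem _ _ | apply add_mem | apply sub_mem | apply mul_mem | apply div_mem | apply pow_mem | apply neg_mem | exact one_mem _)
  have key : N = ⊤ := hgen N mx0 mx1 mx2 mx3 my0 my1 my2 my3
  rw [key]
  exact DegLe.top_one

end CoreTwo

section Inv

variable {K F : Type} [Field K] [Field F] [Algebra K F]

/-- The eight invariants in characteristic different from two. -/
def tOdd (T S a b c w1 w2 w3 : F) : Fin 8 → F :=
  ![T, S ^ 2, a + b + c,
    (a * b ^ 2 + b * c ^ 2 + c * a ^ 2 - 3 * a * b * c) /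
      (a ^ 2 + b ^ 2 + c ^ 2 - a * b - b * c - c * a),
    (a ^ 2 * b + b ^ 2 * c + c ^ 2 * a - 3 * a * b * c) /
      (a ^ 2 + b ^ 2 + c ^ 2 - a * b - b * c - c * a),
    w1 + w2 + w3, a * w1 + b * w2 + c * w3, a ^ 2 * w1 + b ^ 2 * w2 + c ^ 2 * w3]

theorem tOdd_fix (φ : F ≃ₐ[K] F) (T S a b c w1 w2 w3 : F) (hT : φ T = T)
    (hS : φ S = S ∨ φ S = -S) (ha : φ a = a) (hb : φ b = b) (hc : φ c = c)
    (h1 : φ w1 = w1) (h2 : φ w2 = w2) (h3 : φ w3 = w3) (i : Fin 8) :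
    φ (tOdd T S a b c w1 w2 w3 i) = tOdd T S a b c w1 w2 w3 i := by
  have hS2 : φ S ^ 2 = S ^ 2 := by
    rcases hS with h | h <;> rw [h]; ring
  fin_cases i <;> simp [tOdd, hT, hS2, ha, hb, hc, h1, h2, h3, map_div₀, map_ofNat]

theorem tOdd_cyc (φ : F ≃ₐ[K] F) (T S a b c w1 w2 w3 : F) (hT : φ T = T)
    (hS : φ S = S) (ha : φ a = b) (hb : φ b = c) (hc : φ c = a)
    (h1 : φ w1 = w2) (h2 : φ w2 = w3) (h3 : φ w3 = w1) (i : Fin 8) :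
    φ (tOdd T S a b c w1 w2 w3 i) = tOdd T S a b c w1 w2 w3 i := by
  fin_cases i
  · simp [tOdd, hT]
  · simp [tOdd, hS]
  · simp [tOdd, ha, hb, hc]; ring
  · simp [tOdd, ha, hb, hc, map_div₀, map_ofNat]; congr 1 <;> ring
  · simp [tOdd, ha, hb, hc, map_div₀, map_ofNat]; congr 1 <;> ring
  · simp [tOdd, h1, h2, h3]; ring
  · simp [tOdd, ha, hb, hc, h1, h2, h3]; ring
  · simp [tOdd, ha, hb, hc, h1, h2, h3]; ring

theorem tOddX_s1 (φ : F ≃ₐ[K] F) (x0 x1 x2 x3 y0 y1 y2 y3 : F)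
    (T S f1 f2 f3 g1 g2 g3 : F)
    (hT : T = (x0 + y0) + (x1 + y1) + (x2 + y2) + (x3 + y3))
    (hf1 : f1 = (x0 + y0) + (x1 + y1) - (x2 + y2) - (x3 + y3))
    (hf2 : f2 = (x0 + y0) - (x1 + y1) + (x2 + y2) - (x3 + y3))
    (hf3 : f3 = (x0 + y0) - (x1 + y1) - (x2 + y2) + (x3 + y3))
    (hS : S = (x0 - y0) + (x1 - y1) + (x2 - y2) + (x3 - y3))
    (hg1 : g1 = (x0 - y0) + (x1 - y1) - (x2 - y2) - (x3 - y3))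
    (hg2 : g2 = (x0 - y0) - (x1 - y1) + (x2 - y2) - (x3 - y3))
    (hg3 : g3 = (x0 - y0) - (x1 - y1) - (x2 - y2) + (x3 - y3))
    (hx0 : φ x0 = x1) (hy0 : φ y0 = y1)
    (hx1 : φ x1 = x0) (hy1 : φ y1 = y0)
    (hx2 : φ x2 = x3) (hy2 : φ y2 = y3)
    (hx3 : φ x3 = x2) (hy3 : φ y3 = y2) (i : Fin 8) :
    φ (tOdd T S (g2 * g3 / (g1 * S)) (g3 * g1 / (g2 * S)) (g1 * g2 / (g3 * S))
      (S * f1 * g1) (S * f2 * g2) (S * f3 * g3) i) =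
      tOdd T S (g2 * g3 / (g1 * S)) (g3 * g1 / (g2 * S)) (g1 * g2 / (g3 * S))
      (S * f1 * g1) (S * f2 * g2) (S * f3 * g3) i := by
  obtain ⟨eT, ef1, ef2, ef3, eS, eg1, eg2, eg3⟩ :
      φ T = T ∧ φ f1 = f1 ∧ φ f2 = -f2 ∧ φ f3 = -f3 ∧ φ S = S ∧ φ g1 = g1 ∧ φ g2 = -g2 ∧ φ g3 = -g3 := by
    refine ⟨?_, ?_, ?_, ?_, ?_, ?_, ?_, ?_⟩ <;>
    simp only [hT, hS, hf1, hf2, hf3, hg1, hg2, hg3, map_add, map_sub, hx0, hy0, hx1, hy1,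
      hx2, hy2, hx3, hy3] <;> ring
  apply tOdd_fix <;> simp [eT, eS, ef1, ef2, ef3, eg1, eg2, eg3, map_div₀, map_ofNat]

theorem tOddX_s2 (φ : F ≃ₐ[K] F) (x0 x1 x2 x3 y0 y1 y2 y3 : F)
    (T S f1 f2 f3 g1 g2 g3 : F)
    (hT : T = (x0 + y0) + (x1 + y1) + (x2 + y2) + (x3 + y3))
    (hf1 : f1 = (x0 + y0) + (x1 + y1) - (x2 + y2) - (x3 + y3))
    (hf2 : f2 = (x0 + y0) - (x1 + y1) + (x2 + y2) - (x3 + y3))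
    (hf3 : f3 = (x0 + y0) - (x1 + y1) - (x2 + y2) + (x3 + y3))
    (hS : S = (x0 - y0) + (x1 - y1) + (x2 - y2) + (x3 - y3))
    (hg1 : g1 = (x0 - y0) + (x1 - y1) - (x2 - y2) - (x3 - y3))
    (hg2 : g2 = (x0 - y0) - (x1 - y1) + (x2 - y2) - (x3 - y3))
    (hg3 : g3 = (x0 - y0) - (x1 - y1) - (x2 - y2) + (x3 - y3))
    (hx0 : φ x0 = x2) (hy0 : φ y0 = y2)
    (hx1 : φ x1 = x3) (hy1 : φ y1 = y3)
    (hx2 : φ x2 = x0) (hy2 : φ y2 = y0)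
    (hx3 : φ x3 = x1) (hy3 : φ y3 = y1) (i : Fin 8) :
    φ (tOdd T S (g2 * g3 / (g1 * S)) (g3 * g1 / (g2 * S)) (g1 * g2 / (g3 * S))
      (S * f1 * g1) (S * f2 * g2) (S * f3 * g3) i) =
      tOdd T S (g2 * g3 / (g1 * S)) (g3 * g1 / (g2 * S)) (g1 * g2 / (g3 * S))
      (S * f1 * g1) (S * f2 * g2) (S * f3 * g3) i := by
  obtain ⟨eT, ef1, ef2, ef3, eS, eg1, eg2, eg3⟩ :
      φ T = T ∧ φ f1 = -f1 ∧ φ f2 = f2 ∧ φ f3 = -f3 ∧ φ S = S ∧ φ g1 = -g1 ∧ φ g2 = g2 ∧ φ g3 = -g3 := by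
    refine ⟨?_, ?_, ?_, ?_, ?_, ?_, ?_, ?_⟩ <;>
    simp only [hT, hS, hf1, hf2, hf3, hg1, hg2, hg3, map_add, map_sub, hx0, hy0, hx1, hy1,
      hx2, hy2, hx3, hy3] <;> ring
  apply tOdd_fix <;> simp [eT, eS, ef1, ef2, ef3, eg1, eg2, eg3, map_div₀, map_ofNat]

theorem tOddX_k (φ : F ≃ₐ[K] F) (x0 x1 x2 x3 y0 y1 y2 y3 : F)
    (T S f1 f2 f3 g1 g2 g3 : F)
    (hT : T = (x0 + y0) + (x1 + y1) + (x2 + y2) + (x3 + y3))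
    (hf1 : f1 = (x0 + y0) + (x1 + y1) - (x2 + y2) - (x3 + y3))
    (hf2 : f2 = (x0 + y0) - (x1 + y1) + (x2 + y2) - (x3 + y3))
    (hf3 : f3 = (x0 + y0) - (x1 + y1) - (x2 + y2) + (x3 + y3))
    (hS : S = (x0 - y0) + (x1 - y1) + (x2 - y2) + (x3 - y3))
    (hg1 : g1 = (x0 - y0) + (x1 - y1) - (x2 - y2) - (x3 - y3))
    (hg2 : g2 = (x0 - y0) - (x1 - y1) + (x2 - y2) - (x3 - y3))
    (hg3 : g3 = (x0 - y0) - (x1 - y1) - (x2 - y2) + (x3 - y3))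
    (hx0 : φ x0 = y3) (hy0 : φ y0 = x3)
    (hx1 : φ x1 = y2) (hy1 : φ y1 = x2)
    (hx2 : φ x2 = y1) (hy2 : φ y2 = x1)
    (hx3 : φ x3 = y0) (hy3 : φ y3 = x0) (i : Fin 8) :
    φ (tOdd T S (g2 * g3 / (g1 * S)) (g3 * g1 / (g2 * S)) (g1 * g2 / (g3 * S))
      (S * f1 * g1) (S * f2 * g2) (S * f3 * g3) i) =
      tOdd T S (g2 * g3 / (g1 * S)) (g3 * g1 / (g2 * S)) (g1 * g2 / (g3 * S))
      (S * f1 * g1) (S * f2 * g2) (S * f3 * g3) i := by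
  obtain ⟨eT, ef1, ef2, ef3, eS, eg1, eg2, eg3⟩ :
      φ T = T ∧ φ f1 = -f1 ∧ φ f2 = -f2 ∧ φ f3 = f3 ∧ φ S = -S ∧ φ g1 = g1 ∧ φ g2 = g2 ∧ φ g3 = -g3 := by
    refine ⟨?_, ?_, ?_, ?_, ?_, ?_, ?_, ?_⟩ <;>
    simp only [hT, hS, hf1, hf2, hf3, hg1, hg2, hg3, map_add, map_sub, hx0, hy0, hx1, hy1,
      hx2, hy2, hx3, hy3] <;> ring
  apply tOdd_fix <;> simp [eT, eS, ef1, ef2, ef3, eg1, eg2, eg3, map_div₀, map_ofNat]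

theorem tOddX_p (φ : F ≃ₐ[K] F) (x0 x1 x2 x3 y0 y1 y2 y3 : F)
    (T S f1 f2 f3 g1 g2 g3 : F)
    (hT : T = (x0 + y0) + (x1 + y1) + (x2 + y2) + (x3 + y3))
    (hf1 : f1 = (x0 + y0) + (x1 + y1) - (x2 + y2) - (x3 + y3))
    (hf2 : f2 = (x0 + y0) - (x1 + y1) + (x2 + y2) - (x3 + y3))
    (hf3 : f3 = (x0 + y0) - (x1 + y1) - (x2 + y2) + (x3 + y3))
    (hS : S = (x0 - y0) + (x1 - y1) + (x2 - y2) + (x3 - y3))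
    (hg1 : g1 = (x0 - y0) + (x1 - y1) - (x2 - y2) - (x3 - y3))
    (hg2 : g2 = (x0 - y0) - (x1 - y1) + (x2 - y2) - (x3 - y3))
    (hg3 : g3 = (x0 - y0) - (x1 - y1) - (x2 - y2) + (x3 - y3))
    (hx0 : φ x0 = x0) (hy0 : φ y0 = y0)
    (hx1 : φ x1 = x2) (hy1 : φ y1 = y2)
    (hx2 : φ x2 = x3) (hy2 : φ y2 = y3)
    (hx3 : φ x3 = x1) (hy3 : φ y3 = y1) (i : Fin 8) :
    φ (tOdd T S (g2 * g3 / (g1 * S)) (g3 * g1 / (g2 * S)) (g1 * g2 / (g3 * S))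
      (S * f1 * g1) (S * f2 * g2) (S * f3 * g3) i) =
      tOdd T S (g2 * g3 / (g1 * S)) (g3 * g1 / (g2 * S)) (g1 * g2 / (g3 * S))
      (S * f1 * g1) (S * f2 * g2) (S * f3 * g3) i := by
  obtain ⟨eT, ef1, ef2, ef3, eS, eg1, eg2, eg3⟩ :
      φ T = T ∧ φ f1 = f2 ∧ φ f2 = f3 ∧ φ f3 = f1 ∧ φ S = S ∧ φ g1 = g2 ∧ φ g2 = g3 ∧ φ g3 = g1 := by
    refine ⟨?_, ?_, ?_, ?_, ?_, ?_, ?_, ?_⟩ <;>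
    simp only [hT, hS, hf1, hf2, hf3, hg1, hg2, hg3, map_add, map_sub, hx0, hy0, hx1, hy1,
      hx2, hy2, hx3, hy3] <;> ring
  apply tOdd_cyc <;> simp [eT, eS, ef1, ef2, ef3, eg1, eg2, eg3, map_div₀, map_ofNat]

/-- The eight invariants in characteristic two. -/
def tTwo (s0 s1 s2 s3 n0 n1 n2 n3 T e A1 A2 : F) : Fin 8 → F :=
  ![s0 + s1 + s2 + s3, s0 * n0 + s1 * n1 + s2 * n2 + s3 * n3,
    s0 * n0 ^ 2 + s1 * n1 ^ 2 + s2 * n2 ^ 2 + s3 * n3 ^ 2,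
    s0 * n0 ^ 3 + s1 * n1 ^ 3 + s2 * n2 ^ 3 + s3 * n3 ^ 3,
    T ^ 2 + T, e,
    (A1 ^ 3 + A1 ^ 2 * A2 + A2 ^ 3) / (A1 * A2 * (A1 + A2)),
    A1 * A2 * (A1 + A2) / (A1 ^ 2 + A1 * A2 + A2 ^ 2)]

theorem tTwo_gen (φ : F ≃ₐ[K] F) (two : (2 : F) = 0) (s0 s1 s2 s3 n0 n1 n2 n3 T e A1 A2 : F)
    (hk : ∀ k : ℕ, φ (s0 * n0 ^ k + s1 * n1 ^ k + s2 * n2 ^ k + s3 * n3 ^ k) =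
      s0 * n0 ^ k + s1 * n1 ^ k + s2 * n2 ^ k + s3 * n3 ^ k)
    (hT : φ T = T ∨ φ T = T + 1) (he : φ e = e)
    (hA : (φ A1 = A1 ∧ φ A2 = A2) ∨ (φ A1 = A2 ∧ φ A2 = A1 + A2)) (i : Fin 8) :
    φ (tTwo s0 s1 s2 s3 n0 n1 n2 n3 T e A1 A2 i) = tTwo s0 s1 s2 s3 n0 n1 n2 n3 T e A1 A2 i := by
  fin_cases i
  · simpa [tTwo] using hk 0
  · simpa [tTwo] using hk 1
  · exact hk 2
  · exact hk 3
  · rcases hT with h | h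
    · simp [tTwo, h]
    · simp [tTwo, h]
      linear_combination (T + 1) * two
  · exact he
  · rcases hA with ⟨h, h'⟩ | ⟨h, h'⟩
    · simp [tTwo, h, h', map_div₀, map_ofNat]
    · simp [tTwo, h, h', map_div₀, map_ofNat]
      congr 1
      · linear_combination (A2 ^ 3 + 2 * A1 * A2 ^ 2 + A1 ^ 2 * A2) * two
      · linear_combination (A2 ^ 2 * (A1 + A2)) * two
  · rcases hA with ⟨h, h'⟩ | ⟨h, h'⟩
    · simp [tTwo, h, h', map_div₀, map_ofNat]
    · simp [tTwo, h, h', map_div₀, map_ofNat]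
      congr 1
      · linear_combination (A2 ^ 2 * (A1 + A2)) * two
      · linear_combination (A2 ^ 2 + A1 * A2) * two

theorem hsum_aux (two : (2 : F) = 0) (z0 z1 z2 z3 e a1 a2 a3 : F)
    (he : e = z0 + z1 + z2 + z3) (e0 : e ≠ 0)
    (ha1 : a1 = (z0 - z1) / e) (ha2 : a2 = (z0 - z2) / e) (ha3 : a3 = (z0 - z3) / e) :
    a1 + a2 + a3 = 1 := by
  simp only [ha1, ha2, ha3]
  rw [← add_div, ← add_div, div_eq_one_iff_eq e0]
  simp only [he]
  linear_combination (z0 - z1 - z2 - z3) * two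

theorem tTwoX_s1 (φ : F ≃ₐ[K] F) (two : (2 : F) = 0) (x0 x1 x2 x3 y0 y1 y2 y3 : F)
    (s0 s1 s2 s3 z0 z1 z2 z3 e a1 a2 a3 : F)
    (hs0 : s0 = x0 + y0) (hs1 : s1 = x1 + y1) (hs2 : s2 = x2 + y2) (hs3 : s3 = x3 + y3)
    (s00 : s0 ≠ 0) (s10 : s1 ≠ 0) (s20 : s2 ≠ 0) (s30 : s3 ≠ 0)
    (hz0 : z0 = x0 / s0) (hz1 : z1 = x1 / s1) (hz2 : z2 = x2 / s2) (hz3 : z3 = x3 / s3)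
    (he : e = z0 + z1 + z2 + z3) (e0 : e ≠ 0)
    (ha1 : a1 = (z0 - z1) / e) (ha2 : a2 = (z0 - z2) / e) (ha3 : a3 = (z0 - z3) / e)
    (hx0 : φ x0 = x1) (hy0 : φ y0 = y1)
    (hx1 : φ x1 = x0) (hy1 : φ y1 = y0)
    (hx2 : φ x2 = x3) (hy2 : φ y2 = y3)
    (hx3 : φ x3 = x2) (hy3 : φ y3 = y2) (i : Fin 8) :
    φ (tTwo s0 s1 s2 s3 (z0 * (1 + z0)) (z1 * (1 + z1)) (z2 * (1 + z2)) (z3 * (1 + z3))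
      (z0 * (a1 * a2 * a3) + z1 * (a1 * (a2 + 1) * (a3 + 1)) + z2 * ((a1 + 1) * a2 * (a3 + 1))
        + z3 * ((a1 + 1) * (a2 + 1) * a3)) e (a1 ^ 2 + a1) (a2 ^ 2 + a2) i) =
      tTwo s0 s1 s2 s3 (z0 * (1 + z0)) (z1 * (1 + z1)) (z2 * (1 + z2)) (z3 * (1 + z3))
      (z0 * (a1 * a2 * a3) + z1 * (a1 * (a2 + 1) * (a3 + 1)) + z2 * ((a1 + 1) * a2 * (a3 + 1))
        + z3 * ((a1 + 1) * (a2 + 1) * a3)) e (a1 ^ 2 + a1) (a2 ^ 2 + a2) i := by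
  have es0 : φ s0 = s1 := by
    simp only [hs0, hs1, map_add, hx0, hy0]
  have es1 : φ s1 = s0 := by
    simp only [hs1, hs0, map_add, hx1, hy1]
  have es2 : φ s2 = s3 := by
    simp only [hs2, hs3, map_add, hx2, hy2]
  have es3 : φ s3 = s2 := by
    simp only [hs3, hs2, map_add, hx3, hy3]
  have ez0 : φ z0 = z1 := by
    simp only [hz0, hz1, map_div₀, es0, hx0]
  have ez1 : φ z1 = z0 := by
    simp only [hz1, hz0, map_div₀, es1, hx1]
  have ez2 : φ z2 = z3 := by
    simp only [hz2, hz3, map_div₀, es2, hx2]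
  have ez3 : φ z3 = z2 := by
    simp only [hz3, hz2, map_div₀, es3, hx3]
  have ee : φ e = e := by
    simp only [he, map_add, ez0, ez1, ez2, ez3]
    ring
  have ea1 : φ a1 = a1 := by
    simp only [ha1, map_div₀, map_sub, ez0, ez1, ee]
    congr 1
    linear_combination ((-1) * z0 + (1) * z1 + (0) * z2 + (0) * z3) * two
  have ea2 : φ a2 = a2 + 1 := by
    simp only [ha2, map_div₀, map_sub, ez0, ez2, ee]
    rw [div_add_one e0]
    congr 1
    simp only [he]
    linear_combination ((-1) * z0 + (0) * z1 + (0) * z2 + (-1) * z3) * two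
  have ea3 : φ a3 = a3 + 1 := by
    simp only [ha3, map_div₀, map_sub, ez0, ez3, ee]
    rw [div_add_one e0]
    congr 1
    simp only [he]
    linear_combination ((-1) * z0 + (0) * z1 + (-1) * z2 + (0) * z3) * two
  have hsum := hsum_aux two z0 z1 z2 z3 e a1 a2 a3 he e0 ha1 ha2 ha3
  have tw : ∀ a : F, a + 1 + 1 = a := fun a => by linear_combination two
  have tw' : ∀ a : F, 1 + (a + 1) = a := fun a => by linear_combination two
  obtain ⟨en0, en1, en2, en3⟩ :
      φ (z0 * (1 + z0)) = z1 * (1 + z1) ∧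
      φ (z1 * (1 + z1)) = z0 * (1 + z0) ∧
      φ (z2 * (1 + z2)) = z3 * (1 + z3) ∧
      φ (z3 * (1 + z3)) = z2 * (1 + z2) := by
    refine ⟨?_, ?_, ?_, ?_⟩ <;>
    simp only [map_mul, map_add, map_one, ez0, ez1, ez2, ez3]
  apply tTwo_gen φ two
  · intro k
    rw [map_add, map_add, map_add, map_mul, map_mul _ s1, map_mul _ s2, map_mul _ s3,
      map_pow, map_pow, map_pow, map_pow, en0, en1, en2, en3, es0, es1, es2, es3]; ring
  · left
    simp only [map_add, map_mul, map_one, ez0, ez1, ez2, ez3, ea1, ea2, ea3, tw]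
    ring
  · exact ee
  · left
    simp only [map_add, map_pow, ea1, ea2]
    exact ⟨by grind, by grind⟩

theorem tTwoX_s2 (φ : F ≃ₐ[K] F) (two : (2 : F) = 0) (x0 x1 x2 x3 y0 y1 y2 y3 : F)
    (s0 s1 s2 s3 z0 z1 z2 z3 e a1 a2 a3 : F)
    (hs0 : s0 = x0 + y0) (hs1 : s1 = x1 + y1) (hs2 : s2 = x2 + y2) (hs3 : s3 = x3 + y3)
    (s00 : s0 ≠ 0) (s10 : s1 ≠ 0) (s20 : s2 ≠ 0) (s30 : s3 ≠ 0)
    (hz0 : z0 = x0 / s0) (hz1 : z1 = x1 / s1) (hz2 : z2 = x2 / s2) (hz3 : z3 = x3 / s3)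
    (he : e = z0 + z1 + z2 + z3) (e0 : e ≠ 0)
    (ha1 : a1 = (z0 - z1) / e) (ha2 : a2 = (z0 - z2) / e) (ha3 : a3 = (z0 - z3) / e)
    (hx0 : φ x0 = x2) (hy0 : φ y0 = y2)
    (hx1 : φ x1 = x3) (hy1 : φ y1 = y3)
    (hx2 : φ x2 = x0) (hy2 : φ y2 = y0)
    (hx3 : φ x3 = x1) (hy3 : φ y3 = y1) (i : Fin 8) :
    φ (tTwo s0 s1 s2 s3 (z0 * (1 + z0)) (z1 * (1 + z1)) (z2 * (1 + z2)) (z3 * (1 + z3))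
      (z0 * (a1 * a2 * a3) + z1 * (a1 * (a2 + 1) * (a3 + 1)) + z2 * ((a1 + 1) * a2 * (a3 + 1))
        + z3 * ((a1 + 1) * (a2 + 1) * a3)) e (a1 ^ 2 + a1) (a2 ^ 2 + a2) i) =
      tTwo s0 s1 s2 s3 (z0 * (1 + z0)) (z1 * (1 + z1)) (z2 * (1 + z2)) (z3 * (1 + z3))
      (z0 * (a1 * a2 * a3) + z1 * (a1 * (a2 + 1) * (a3 + 1)) + z2 * ((a1 + 1) * a2 * (a3 + 1))
        + z3 * ((a1 + 1) * (a2 + 1) * a3)) e (a1 ^ 2 + a1) (a2 ^ 2 + a2) i := by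
  have es0 : φ s0 = s2 := by
    simp only [hs0, hs2, map_add, hx0, hy0]
  have es1 : φ s1 = s3 := by
    simp only [hs1, hs3, map_add, hx1, hy1]
  have es2 : φ s2 = s0 := by
    simp only [hs2, hs0, map_add, hx2, hy2]
  have es3 : φ s3 = s1 := by
    simp only [hs3, hs1, map_add, hx3, hy3]
  have ez0 : φ z0 = z2 := by
    simp only [hz0, hz2, map_div₀, es0, hx0]
  have ez1 : φ z1 = z3 := by
    simp only [hz1, hz3, map_div₀, es1, hx1]
  have ez2 : φ z2 = z0 := by
    simp only [hz2, hz0, map_div₀, es2, hx2]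
  have ez3 : φ z3 = z1 := by
    simp only [hz3, hz1, map_div₀, es3, hx3]
  have ee : φ e = e := by
    simp only [he, map_add, ez0, ez1, ez2, ez3]
    ring
  have ea1 : φ a1 = a1 + 1 := by
    simp only [ha1, map_div₀, map_sub, ez0, ez1, ee]
    rw [div_add_one e0]
    congr 1
    simp only [he]
    linear_combination ((-1) * z0 + (0) * z1 + (0) * z2 + (-1) * z3) * two
  have ea2 : φ a2 = a2 := by
    simp only [ha2, map_div₀, map_sub, ez0, ez2, ee]
    congr 1
    linear_combination ((-1) * z0 + (0) * z1 + (1) * z2 + (0) * z3) * two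
  have ea3 : φ a3 = a3 + 1 := by
    simp only [ha3, map_div₀, map_sub, ez0, ez3, ee]
    rw [div_add_one e0]
    congr 1
    simp only [he]
    linear_combination ((-1) * z0 + (-1) * z1 + (0) * z2 + (0) * z3) * two
  have hsum := hsum_aux two z0 z1 z2 z3 e a1 a2 a3 he e0 ha1 ha2 ha3
  have tw : ∀ a : F, a + 1 + 1 = a := fun a => by linear_combination two
  have tw' : ∀ a : F, 1 + (a + 1) = a := fun a => by linear_combination two
  obtain ⟨en0, en1, en2, en3⟩ :
      φ (z0 * (1 + z0)) = z2 * (1 + z2) ∧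
      φ (z1 * (1 + z1)) = z3 * (1 + z3) ∧
      φ (z2 * (1 + z2)) = z0 * (1 + z0) ∧
      φ (z3 * (1 + z3)) = z1 * (1 + z1) := by
    refine ⟨?_, ?_, ?_, ?_⟩ <;>
    simp only [map_mul, map_add, map_one, ez0, ez1, ez2, ez3]
  apply tTwo_gen φ two
  · intro k
    rw [map_add, map_add, map_add, map_mul, map_mul _ s1, map_mul _ s2, map_mul _ s3,
      map_pow, map_pow, map_pow, map_pow, en0, en1, en2, en3, es0, es1, es2, es3]; ring
  · left
    simp only [map_add, map_mul, map_one, ez0, ez1, ez2, ez3, ea1, ea2, ea3, tw]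
    ring
  · exact ee
  · left
    simp only [map_add, map_pow, ea1, ea2]
    exact ⟨by grind, by grind⟩

theorem tTwoX_k (φ : F ≃ₐ[K] F) (two : (2 : F) = 0) (x0 x1 x2 x3 y0 y1 y2 y3 : F)
    (s0 s1 s2 s3 z0 z1 z2 z3 e a1 a2 a3 : F)
    (hs0 : s0 = x0 + y0) (hs1 : s1 = x1 + y1) (hs2 : s2 = x2 + y2) (hs3 : s3 = x3 + y3)
    (s00 : s0 ≠ 0) (s10 : s1 ≠ 0) (s20 : s2 ≠ 0) (s30 : s3 ≠ 0)
    (hz0 : z0 = x0 / s0) (hz1 : z1 = x1 / s1) (hz2 : z2 = x2 / s2) (hz3 : z3 = x3 / s3)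
    (he : e = z0 + z1 + z2 + z3) (e0 : e ≠ 0)
    (ha1 : a1 = (z0 - z1) / e) (ha2 : a2 = (z0 - z2) / e) (ha3 : a3 = (z0 - z3) / e)
    (hx0 : φ x0 = y3) (hy0 : φ y0 = x3)
    (hx1 : φ x1 = y2) (hy1 : φ y1 = x2)
    (hx2 : φ x2 = y1) (hy2 : φ y2 = x1)
    (hx3 : φ x3 = y0) (hy3 : φ y3 = x0) (i : Fin 8) :
    φ (tTwo s0 s1 s2 s3 (z0 * (1 + z0)) (z1 * (1 + z1)) (z2 * (1 + z2)) (z3 * (1 + z3))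
      (z0 * (a1 * a2 * a3) + z1 * (a1 * (a2 + 1) * (a3 + 1)) + z2 * ((a1 + 1) * a2 * (a3 + 1))
        + z3 * ((a1 + 1) * (a2 + 1) * a3)) e (a1 ^ 2 + a1) (a2 ^ 2 + a2) i) =
      tTwo s0 s1 s2 s3 (z0 * (1 + z0)) (z1 * (1 + z1)) (z2 * (1 + z2)) (z3 * (1 + z3))
      (z0 * (a1 * a2 * a3) + z1 * (a1 * (a2 + 1) * (a3 + 1)) + z2 * ((a1 + 1) * a2 * (a3 + 1))
        + z3 * ((a1 + 1) * (a2 + 1) * a3)) e (a1 ^ 2 + a1) (a2 ^ 2 + a2) i := by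
  have es0 : φ s0 = s3 := by
    simp only [hs0, hs3, map_add, hx0, hy0]; ring
  have es1 : φ s1 = s2 := by
    simp only [hs1, hs2, map_add, hx1, hy1]; ring
  have es2 : φ s2 = s1 := by
    simp only [hs2, hs1, map_add, hx2, hy2]; ring
  have es3 : φ s3 = s0 := by
    simp only [hs3, hs0, map_add, hx3, hy3]; ring
  have ez0 : φ z0 = z3 + 1 := by
    simp only [hz0, hz3, map_div₀, es0, hx0]
    rw [div_add_one s30]
    congr 1
    simp only [hs3]
    linear_combination (-x3) * two
  have ez1 : φ z1 = z2 + 1 := by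
    simp only [hz1, hz2, map_div₀, es1, hx1]
    rw [div_add_one s20]
    congr 1
    simp only [hs2]
    linear_combination (-x2) * two
  have ez2 : φ z2 = z1 + 1 := by
    simp only [hz2, hz1, map_div₀, es2, hx2]
    rw [div_add_one s10]
    congr 1
    simp only [hs1]
    linear_combination (-x1) * two
  have ez3 : φ z3 = z0 + 1 := by
    simp only [hz3, hz0, map_div₀, es3, hx3]
    rw [div_add_one s00]
    congr 1
    simp only [hs0]
    linear_combination (-x0) * two
  have ee : φ e = e := by
    simp only [he, map_add, ez0, ez1, ez2, ez3]
    linear_combination 2 * two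
  have ea1 : φ a1 = a1 + 1 := by
    simp only [ha1, map_div₀, map_sub, ez0, ez1, ee]
    rw [div_add_one e0]
    congr 1
    simp only [he]
    linear_combination ((-1) * z0 + (0) * z1 + (-1) * z2 + (0) * z3) * two
  have ea2 : φ a2 = a2 + 1 := by
    simp only [ha2, map_div₀, map_sub, ez0, ez2, ee]
    rw [div_add_one e0]
    congr 1
    simp only [he]
    linear_combination ((-1) * z0 + (-1) * z1 + (0) * z2 + (0) * z3) * two
  have ea3 : φ a3 = a3 := by
    simp only [ha3, map_div₀, map_sub, ez0, ez3, ee]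
    congr 1
    linear_combination ((-1) * z0 + (0) * z1 + (0) * z2 + (1) * z3) * two
  have hsum := hsum_aux two z0 z1 z2 z3 e a1 a2 a3 he e0 ha1 ha2 ha3
  have tw : ∀ a : F, a + 1 + 1 = a := fun a => by linear_combination two
  have tw' : ∀ a : F, 1 + (a + 1) = a := fun a => by linear_combination two
  obtain ⟨en0, en1, en2, en3⟩ :
      φ (z0 * (1 + z0)) = z3 * (1 + z3) ∧
      φ (z1 * (1 + z1)) = z2 * (1 + z2) ∧
      φ (z2 * (1 + z2)) = z1 * (1 + z1) ∧
      φ (z3 * (1 + z3)) = z0 * (1 + z0) := by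
    refine ⟨?_, ?_, ?_, ?_⟩ <;>
    simp only [map_mul, map_add, map_one, ez0, ez1, ez2, ez3, tw'] <;> ring
  apply tTwo_gen φ two
  · intro k
    rw [map_add, map_add, map_add, map_mul, map_mul _ s1, map_mul _ s2, map_mul _ s3,
      map_pow, map_pow, map_pow, map_pow, en0, en1, en2, en3, es0, es1, es2, es3]; ring
  · right
    simp only [map_add, map_mul, map_one, ez0, ez1, ez2, ez3, ea1, ea2, ea3, tw]
    linear_combination (2 * a1 * a2 * a3 + a1 * a2 + a2 * a3 + a3 * a1) * two + hsum
  · exact ee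
  · left
    simp only [map_add, map_pow, ea1, ea2]
    exact ⟨by grind, by grind⟩

theorem tTwoX_p (φ : F ≃ₐ[K] F) (two : (2 : F) = 0) (x0 x1 x2 x3 y0 y1 y2 y3 : F)
    (s0 s1 s2 s3 z0 z1 z2 z3 e a1 a2 a3 : F)
    (hs0 : s0 = x0 + y0) (hs1 : s1 = x1 + y1) (hs2 : s2 = x2 + y2) (hs3 : s3 = x3 + y3)
    (s00 : s0 ≠ 0) (s10 : s1 ≠ 0) (s20 : s2 ≠ 0) (s30 : s3 ≠ 0)
    (hz0 : z0 = x0 / s0) (hz1 : z1 = x1 / s1) (hz2 : z2 = x2 / s2) (hz3 : z3 = x3 / s3)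
    (he : e = z0 + z1 + z2 + z3) (e0 : e ≠ 0)
    (ha1 : a1 = (z0 - z1) / e) (ha2 : a2 = (z0 - z2) / e) (ha3 : a3 = (z0 - z3) / e)
    (hx0 : φ x0 = x0) (hy0 : φ y0 = y0)
    (hx1 : φ x1 = x2) (hy1 : φ y1 = y2)
    (hx2 : φ x2 = x3) (hy2 : φ y2 = y3)
    (hx3 : φ x3 = x1) (hy3 : φ y3 = y1) (i : Fin 8) :
    φ (tTwo s0 s1 s2 s3 (z0 * (1 + z0)) (z1 * (1 + z1)) (z2 * (1 + z2)) (z3 * (1 + z3))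
      (z0 * (a1 * a2 * a3) + z1 * (a1 * (a2 + 1) * (a3 + 1)) + z2 * ((a1 + 1) * a2 * (a3 + 1))
        + z3 * ((a1 + 1) * (a2 + 1) * a3)) e (a1 ^ 2 + a1) (a2 ^ 2 + a2) i) =
      tTwo s0 s1 s2 s3 (z0 * (1 + z0)) (z1 * (1 + z1)) (z2 * (1 + z2)) (z3 * (1 + z3))
      (z0 * (a1 * a2 * a3) + z1 * (a1 * (a2 + 1) * (a3 + 1)) + z2 * ((a1 + 1) * a2 * (a3 + 1))
        + z3 * ((a1 + 1) * (a2 + 1) * a3)) e (a1 ^ 2 + a1) (a2 ^ 2 + a2) i := by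
  have es0 : φ s0 = s0 := by
    simp only [hs0, hs0, map_add, hx0, hy0]
  have es1 : φ s1 = s2 := by
    simp only [hs1, hs2, map_add, hx1, hy1]
  have es2 : φ s2 = s3 := by
    simp only [hs2, hs3, map_add, hx2, hy2]
  have es3 : φ s3 = s1 := by
    simp only [hs3, hs1, map_add, hx3, hy3]
  have ez0 : φ z0 = z0 := by
    simp only [hz0, hz0, map_div₀, es0, hx0]
  have ez1 : φ z1 = z2 := by
    simp only [hz1, hz2, map_div₀, es1, hx1]
  have ez2 : φ z2 = z3 := by
    simp only [hz2, hz3, map_div₀, es2, hx2]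
  have ez3 : φ z3 = z1 := by
    simp only [hz3, hz1, map_div₀, es3, hx3]
  have ee : φ e = e := by
    simp only [he, map_add, ez0, ez1, ez2, ez3]
    ring
  have ea1 : φ a1 = a2 := by
    simp only [ha1, ha2, map_div₀, map_sub, ez0, ez1, ee]
  have ea2 : φ a2 = a3 := by
    simp only [ha2, ha3, map_div₀, map_sub, ez0, ez2, ee]
  have ea3 : φ a3 = a1 := by
    simp only [ha3, ha1, map_div₀, map_sub, ez0, ez3, ee]
  have hsum := hsum_aux two z0 z1 z2 z3 e a1 a2 a3 he e0 ha1 ha2 ha3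
  have tw : ∀ a : F, a + 1 + 1 = a := fun a => by linear_combination two
  have tw' : ∀ a : F, 1 + (a + 1) = a := fun a => by linear_combination two
  obtain ⟨en0, en1, en2, en3⟩ :
      φ (z0 * (1 + z0)) = z0 * (1 + z0) ∧
      φ (z1 * (1 + z1)) = z2 * (1 + z2) ∧
      φ (z2 * (1 + z2)) = z3 * (1 + z3) ∧
      φ (z3 * (1 + z3)) = z1 * (1 + z1) := by
    refine ⟨?_, ?_, ?_, ?_⟩ <;>
    simp only [map_mul, map_add, map_one, ez0, ez1, ez2, ez3]
  apply tTwo_gen φ two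
  · intro k
    rw [map_add, map_add, map_add, map_mul, map_mul _ s1, map_mul _ s2, map_mul _ s3,
      map_pow, map_pow, map_pow, map_pow, en0, en1, en2, en3, es0, es1, es2, es3]; ring
  · left
    simp only [map_add, map_mul, map_one, ez0, ez1, ez2, ez3, ea1, ea2, ea3]
    ring
  · exact ee
  · right
    simp only [map_add, map_pow, ea1, ea2, true_and]
    have : a3 = 1 - a1 - a2 := by rw [← hsum]; ring
    rw [this]
    linear_combination (1 - 2 * a1 - 2 * a2 + a1 * a2) * two

end Inv

section Final

variable {K : Type} [Field K]

theorem aeval_Xvar (P : MvPolynomial (Fin 8) K) :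
    MvPolynomial.aeval (Xvar K (Fin 8)) P = algebraMap _ (RFF K (Fin 8)) P := by
  have h : (MvPolynomial.aeval (Xvar K (Fin 8)) : MvPolynomial (Fin 8) K →ₐ[K] RFF K (Fin 8)) =
      IsScalarTower.toAlgHom K (MvPolynomial (Fin 8) K) (RFF K (Fin 8)) := by
    apply MvPolynomial.algHom_ext
    intro i
    simp [Xvar]
  rw [h]; rfl

theorem nz {R : Type} [CommRing R] [Algebra K R] (P : MvPolynomial (Fin 8) K) (v : Fin 8 → R)
    (h : MvPolynomial.aeval v P ≠ 0) : MvPolynomial.aeval (Xvar K (Fin 8)) P ≠ 0 := by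
  rw [aeval_Xvar]
  intro h0
  apply h
  have : P = 0 := (IsFractionRing.injective (MvPolynomial (Fin 8) K) (RFF K (Fin 8)))
    (by rw [h0, map_zero])
  rw [this, map_zero]

theorem gen_top (N : IntermediateField K (RFF K (Fin 8))) (h : ∀ i, Xvar K (Fin 8) i ∈ N) :
    N = ⊤ := by
  rw [eq_top_iff]
  rintro w -
  have hp : ∀ P : MvPolynomial (Fin 8) K, algebraMap _ (RFF K (Fin 8)) P ∈ N := by
    intro P
    rw [← aeval_Xvar]
    induction P using MvPolynomial.induction_on with
    | C a => rw [MvPolynomial.aeval_C]; exact N.algebraMap_mem a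
    | add p q hp hq => rw [map_add]; exact add_mem hp hq
    | mul_X p i hp => rw [map_mul, MvPolynomial.aeval_X]; exact mul_mem hp (h i)
  obtain ⟨p, q, -, rfl⟩ := IsFractionRing.div_surjective (A := MvPolynomial (Fin 8) K) w
  exact div_mem (hp p) (hp q)

open MvPolynomial in
theorem odd_nonvanishing (two : (2 : K) ≠ 0) (S g1 g2 g3 : RFF K (Fin 8))
    (hS : S = (Xvar K (Fin 8) 0 - Xvar K (Fin 8) 7) + (Xvar K (Fin 8) 1 - Xvar K (Fin 8) 6) +
      (Xvar K (Fin 8) 2 - Xvar K (Fin 8) 5) + (Xvar K (Fin 8) 3 - Xvar K (Fin 8) 4))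
    (hg1 : g1 = (Xvar K (Fin 8) 0 - Xvar K (Fin 8) 7) + (Xvar K (Fin 8) 1 - Xvar K (Fin 8) 6) -
      (Xvar K (Fin 8) 2 - Xvar K (Fin 8) 5) - (Xvar K (Fin 8) 3 - Xvar K (Fin 8) 4))
    (hg2 : g2 = (Xvar K (Fin 8) 0 - Xvar K (Fin 8) 7) - (Xvar K (Fin 8) 1 - Xvar K (Fin 8) 6) +
      (Xvar K (Fin 8) 2 - Xvar K (Fin 8) 5) - (Xvar K (Fin 8) 3 - Xvar K (Fin 8) 4))
    (hg3 : g3 = (Xvar K (Fin 8) 0 - Xvar K (Fin 8) 7) - (Xvar K (Fin 8) 1 - Xvar K (Fin 8) 6) -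
      (Xvar K (Fin 8) 2 - Xvar K (Fin 8) 5) + (Xvar K (Fin 8) 3 - Xvar K (Fin 8) 4)) :
    S ≠ 0 ∧ g1 ≠ 0 ∧ g2 ≠ 0 ∧ g3 ≠ 0 ∧ g2 ^ 2 - g1 ^ 2 ≠ 0 ∧ g3 ^ 2 - g1 ^ 2 ≠ 0 ∧
      g3 ^ 2 - g2 ^ 2 ≠ 0 ∧ (g2 * g3) ^ 4 + (g3 * g1) ^ 4 + (g1 * g2) ^ 4 -
      (g2 * g3) ^ 2 * (g3 * g1) ^ 2 - (g3 * g1) ^ 2 * (g1 * g2) ^ 2 -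
      (g1 * g2) ^ 2 * (g2 * g3) ^ 2 ≠ 0 := by
  obtain ⟨PS, hPS⟩ : ∃ P : MvPolynomial (Fin 8) K, P = (X 0 - X 7) + (X 1 - X 6) + (X 2 - X 5) +
    (X 3 - X 4) := ⟨_, rfl⟩
  obtain ⟨P1, hP1⟩ : ∃ P : MvPolynomial (Fin 8) K, P = (X 0 - X 7) + (X 1 - X 6) - (X 2 - X 5) -
    (X 3 - X 4) := ⟨_, rfl⟩
  obtain ⟨P2, hP2⟩ : ∃ P : MvPolynomial (Fin 8) K, P = (X 0 - X 7) - (X 1 - X 6) + (X 2 - X 5) -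
    (X 3 - X 4) := ⟨_, rfl⟩
  obtain ⟨P3, hP3⟩ : ∃ P : MvPolynomial (Fin 8) K, P = (X 0 - X 7) - (X 1 - X 6) - (X 2 - X 5) +
    (X 3 - X 4) := ⟨_, rfl⟩
  have eS : S = aeval (Xvar K (Fin 8)) PS := by simp [hPS, hS]
  have e1 : g1 = aeval (Xvar K (Fin 8)) P1 := by simp [hP1, hg1]
  have e2 : g2 = aeval (Xvar K (Fin 8)) P2 := by simp [hP2, hg2]
  have e3 : g3 = aeval (Xvar K (Fin 8)) P3 := by simp [hP3, hg3]
  rw [eS, e1, e2, e3]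
  simp only [← map_mul, ← map_pow, ← map_add, ← map_sub]
  have p1 : ∀ P ∈ ({PS, P1, P2, P3} : Set (MvPolynomial (Fin 8) K)),
      aeval (![1, 0, 0, 0, 0, 0, 0, 0] : Fin 8 → K) P = 1 := by
    rintro P (rfl | rfl | rfl | rfl) <;> simp [hPS, hP1, hP2, hP3]
  have q1 : aeval (![2, 0, 1, 1, 0, 0, 0, 0] : Fin 8 → K) P1 = 0 := by
    simp [hP1]; ring
  have q2 : aeval (![2, 0, 1, 1, 0, 0, 0, 0] : Fin 8 → K) P2 = 2 := by simp [hP2]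
  have q3 : aeval (![2, 0, 1, 1, 0, 0, 0, 0] : Fin 8 → K) P3 = 2 := by simp [hP3]
  have r2 : aeval (![2, 1, 0, 1, 0, 0, 0, 0] : Fin 8 → K) P2 = 0 := by simp [hP2]; ring
  have r3 : aeval (![2, 1, 0, 1, 0, 0, 0, 0] : Fin 8 → K) P3 = 2 := by simp [hP3]
  refine ⟨nz _ (![1, 0, 0, 0, 0, 0, 0, 0] : Fin 8 → K) ?_,
    nz _ (![1, 0, 0, 0, 0, 0, 0, 0] : Fin 8 → K) ?_,
    nz _ (![1, 0, 0, 0, 0, 0, 0, 0] : Fin 8 → K) ?_,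
    nz _ (![1, 0, 0, 0, 0, 0, 0, 0] : Fin 8 → K) ?_,
    nz _ (![2, 0, 1, 1, 0, 0, 0, 0] : Fin 8 → K) ?_,
    nz _ (![2, 0, 1, 1, 0, 0, 0, 0] : Fin 8 → K) ?_,
    nz _ (![2, 1, 0, 1, 0, 0, 0, 0] : Fin 8 → K) ?_,
    nz _ (![2, 0, 1, 1, 0, 0, 0, 0] : Fin 8 → K) ?_⟩
  · rw [p1 _ (by simp)]; exact one_ne_zero
  · rw [p1 _ (by simp)]; exact one_ne_zero
  · rw [p1 _ (by simp)]; exact one_ne_zero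
  · rw [p1 _ (by simp)]; exact one_ne_zero
  · simp only [map_sub, map_pow, q1, q2]; simpa using two
  · simp only [map_sub, map_pow, q1, q3]; simpa using two
  · simp only [map_sub, map_pow, r2, r3]; simpa using two
  · simp only [map_sub, map_add, map_mul, map_pow, q1, q2, q3]; simpa using two

open MvPolynomial in
theorem n_ne (x0 x1 y0 y1 : Fin 8) (h1 : x1 ≠ x0) (h2 : y0 ≠ x0) (h3 : y1 ≠ x0) (h4 : y0 ≠ x1)
    (h5 : y1 ≠ x1) (h6 : y1 ≠ y0) (s0 s1 z0 z1 : RFF K (Fin 8))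
    (hs0 : s0 = Xvar K (Fin 8) x0 + Xvar K (Fin 8) y0)
    (hs1 : s1 = Xvar K (Fin 8) x1 + Xvar K (Fin 8) y1) (s00 : s0 ≠ 0) (s10 : s1 ≠ 0)
    (hz0 : z0 = Xvar K (Fin 8) x0 / s0) (hz1 : z1 = Xvar K (Fin 8) x1 / s1) :
    z0 * (1 + z0) ≠ z1 * (1 + z1) := by
  have key := nz (K := K) (X x0 * ((X x0 + X y0) + X x0) * (X x1 + X y1) ^ 2 -
    X x1 * ((X x1 + X y1) + X x1) * (X x0 + X y0) ^ 2)
    (fun i => if i = x0 then 0 else if i = x1 then Polynomial.X else if i = y0 then 1 else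
      (1 - Polynomial.X : Polynomial K)) (by
      simp [h1, h2, h3, h4, h5, h6]
      intro h
      have := congrArg (Polynomial.eval 0) h
      simp at this)
  simp only [map_sub, map_add, map_mul, map_pow, aeval_X, ← hs0, ← hs1] at key
  intro h
  apply key
  have a0 : Xvar K (Fin 8) x0 = z0 * s0 := by rw [hz0]; field_simp
  have a1 : Xvar K (Fin 8) x1 = z1 * s1 := by rw [hz1]; field_simp
  rw [a0, a1]
  linear_combination s0 ^ 2 * s1 ^ 2 * h

theorem s_ne (x0 y0 : Fin 8) (h : y0 ≠ x0) : Xvar K (Fin 8) x0 + Xvar K (Fin 8) y0 ≠ 0 := by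
  have key := nz (K := K) (MvPolynomial.X x0 + MvPolynomial.X y0)
    (fun i => if i = x0 then (1 : K) else 0) (by simp [h])
  simpa using key

open MvPolynomial in
theorem two_nonvanishing (two : (2 : RFF K (Fin 8)) = 0)
    (s0 s1 s2 s3 z0 z1 z2 z3 : RFF K (Fin 8))
    (hs0 : s0 = Xvar K (Fin 8) 0 + Xvar K (Fin 8) 7)
    (hs1 : s1 = Xvar K (Fin 8) 1 + Xvar K (Fin 8) 6)
    (hs2 : s2 = Xvar K (Fin 8) 2 + Xvar K (Fin 8) 5)
    (hs3 : s3 = Xvar K (Fin 8) 3 + Xvar K (Fin 8) 4)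
    (s00 : s0 ≠ 0) (s10 : s1 ≠ 0) (s20 : s2 ≠ 0) (s30 : s3 ≠ 0)
    (hz0 : z0 = Xvar K (Fin 8) 0 / s0) (hz1 : z1 = Xvar K (Fin 8) 1 / s1)
    (hz2 : z2 = Xvar K (Fin 8) 2 / s2) (hz3 : z3 = Xvar K (Fin 8) 3 / s3) :
    z0 + z1 + z2 + z3 ≠ 0 ∧ ((z0 - z1) * (z2 + z3)) ^ 2 +
      ((z0 - z1) * (z2 + z3)) * ((z0 - z2) * (z1 + z3)) + ((z0 - z2) * (z1 + z3)) ^ 2 ≠ 0 := by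
  have a0 : Xvar K (Fin 8) 0 = z0 * s0 := by rw [hz0]; field_simp
  have a1 : Xvar K (Fin 8) 1 = z1 * s1 := by rw [hz1]; field_simp
  have a2 : Xvar K (Fin 8) 2 = z2 * s2 := by rw [hz2]; field_simp
  have a3 : Xvar K (Fin 8) 3 = z3 * s3 := by rw [hz3]; field_simp
  constructor
  · have key := nz (K := K) (X 0 * (X 1 + X 6) * (X 2 + X 5) * (X 3 + X 4) +
      X 1 * (X 0 + X 7) * (X 2 + X 5) * (X 3 + X 4) +
      X 2 * (X 0 + X 7) * (X 1 + X 6) * (X 3 + X 4) +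
      X 3 * (X 0 + X 7) * (X 1 + X 6) * (X 2 + X 5))
      (![1, 0, 0, 0, 1, 1, 1, 0] : Fin 8 → K) (by simp)
    simp only [map_sub, map_add, map_mul, map_pow, aeval_X, ← hs0, ← hs1, ← hs2, ← hs3] at key
    intro h
    apply key
    rw [a0, a1, a2, a3]
    linear_combination s0 * s1 * s2 * s3 * h
  · have key := nz (K := K)
      (((X 0 * (X 1 + X 6) - X 1 * (X 0 + X 7)) * (X 2 * (X 3 + X 4) + X 3 * (X 2 + X 5))) ^ 2 +
      ((X 0 * (X 1 + X 6) - X 1 * (X 0 + X 7)) * (X 2 * (X 3 + X 4) + X 3 * (X 2 + X 5))) *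
      ((X 0 * (X 2 + X 5) - X 2 * (X 0 + X 7)) * (X 1 * (X 3 + X 4) + X 3 * (X 1 + X 6))) +
      ((X 0 * (X 2 + X 5) - X 2 * (X 0 + X 7)) * (X 1 * (X 3 + X 4) + X 3 * (X 1 + X 6))) ^ 2)
      (![0, 0, 1, 1, 0, 0, 1, 1] : Fin 8 → K) (by simp)
    simp only [map_sub, map_add, map_mul, map_pow, aeval_X, ← hs0, ← hs1, ← hs2, ← hs3] at key
    intro h
    apply key
    rw [a0, a1, a2, a3]
    linear_combination (s0 * s1 * s2 * s3) ^ 2 * h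

theorem case_odd (two : (2 : RFF K (Fin 8)) ≠ 0) : IsRatExt K ↥(fixedSub K (Fin 8) G13) := by
  have two' : (2 : K) ≠ 0 := by
    intro h
    apply two
    have := congrArg (algebraMap K (RFF K (Fin 8))) h
    rwa [map_ofNat, map_zero] at this
  obtain ⟨x, hx⟩ : ∃ x, x = Xvar K (Fin 8) := ⟨_, rfl⟩
  obtain ⟨T, hT⟩ : ∃ T, T = (x 0 + x 7) + (x 1 + x 6) + (x 2 + x 5) + (x 3 + x 4) := ⟨_, rfl⟩
  obtain ⟨f1, hf1⟩ : ∃ T, T = (x 0 + x 7) + (x 1 + x 6) - (x 2 + x 5) - (x 3 + x 4) := ⟨_, rfl⟩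
  obtain ⟨f2, hf2⟩ : ∃ T, T = (x 0 + x 7) - (x 1 + x 6) + (x 2 + x 5) - (x 3 + x 4) := ⟨_, rfl⟩
  obtain ⟨f3, hf3⟩ : ∃ T, T = (x 0 + x 7) - (x 1 + x 6) - (x 2 + x 5) + (x 3 + x 4) := ⟨_, rfl⟩
  obtain ⟨S, hS⟩ : ∃ T, T = (x 0 - x 7) + (x 1 - x 6) + (x 2 - x 5) + (x 3 - x 4) := ⟨_, rfl⟩
  obtain ⟨g1, hg1⟩ : ∃ T, T = (x 0 - x 7) + (x 1 - x 6) - (x 2 - x 5) - (x 3 - x 4) := ⟨_, rfl⟩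
  obtain ⟨g2, hg2⟩ : ∃ T, T = (x 0 - x 7) - (x 1 - x 6) + (x 2 - x 5) - (x 3 - x 4) := ⟨_, rfl⟩
  obtain ⟨g3, hg3⟩ : ∃ T, T = (x 0 - x 7) - (x 1 - x 6) - (x 2 - x 5) + (x 3 - x 4) := ⟨_, rfl⟩
  obtain ⟨S0, g10, g20, g30, h21, h31, h32, hQ⟩ := odd_nonvanishing two' S g1 g2 g3
    (by rw [hS, hx]) (by rw [hg1, hx]) (by rw [hg2, hx]) (by rw [hg3, hx])
  have hp : ∀ σ i, permHom K (Fin 8) σ (x i) = x (σ i) := by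
    intro σ i; rw [hx, permHom_Xvar]
  have ha : g2 * g3 / (g1 * S) = (g2 * g3) ^ 2 / (g1 * g2 * g3 * S) := by field_simp
  have hb : g3 * g1 / (g2 * S) = (g3 * g1) ^ 2 / (g1 * g2 * g3 * S) := by field_simp
  have hc : g1 * g2 / (g3 * S) = (g1 * g2) ^ 2 / (g1 * g2 * g3 * S) := by field_simp
  have D0 : g1 * g2 * g3 * S ≠ 0 :=
    mul_ne_zero (mul_ne_zero (mul_ne_zero g10 g20) g30) S0
  refine reduction K (tOdd T S (g2 * g3 / (g1 * S)) (g3 * g1 / (g2 * S)) (g1 * g2 / (g3 * S))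
      (S * f1 * g1) (S * f2 * g2) (S * f3 * g3)) ?_ ?_ ?_ ?_ ?_
  · refine tOddX_s1 _ (x 0) (x 1) (x 2) (x 3) (x 7) (x 6) (x 5) (x 4) T S f1 f2 f3 g1 g2 g3
      hT hf1 hf2 hf3 hS hg1 hg2 hg3 ?_ ?_ ?_ ?_ ?_ ?_ ?_ ?_ <;> rw [hp] <;> congr 1
  · refine tOddX_s2 _ (x 0) (x 1) (x 2) (x 3) (x 7) (x 6) (x 5) (x 4) T S f1 f2 f3 g1 g2 g3
      hT hf1 hf2 hf3 hS hg1 hg2 hg3 ?_ ?_ ?_ ?_ ?_ ?_ ?_ ?_ <;> rw [hp] <;> congr 1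
  · refine tOddX_k _ (x 0) (x 1) (x 2) (x 3) (x 7) (x 6) (x 5) (x 4) T S f1 f2 f3 g1 g2 g3
      hT hf1 hf2 hf3 hS hg1 hg2 hg3 ?_ ?_ ?_ ?_ ?_ ?_ ?_ ?_ <;> rw [hp] <;> congr 1
  · refine tOddX_p _ (x 0) (x 1) (x 2) (x 3) (x 7) (x 6) (x 5) (x 4) T S f1 f2 f3 g1 g2 g3
      hT hf1 hf2 hf3 hS hg1 hg2 hg3 ?_ ?_ ?_ ?_ ?_ ?_ ?_ ?_ <;> rw [hp] <;> congr 1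
  · have mem : ∀ i, tOdd T S (g2 * g3 / (g1 * S)) (g3 * g1 / (g2 * S)) (g1 * g2 / (g3 * S))
        (S * f1 * g1) (S * f2 * g2) (S * f3 * g3) i ∈ IntermediateField.adjoin K (Set.range
          (tOdd T S (g2 * g3 / (g1 * S)) (g3 * g1 / (g2 * S)) (g1 * g2 / (g3 * S))
          (S * f1 * g1) (S * f2 * g2) (S * f3 * g3))) :=
      fun i => IntermediateField.subset_adjoin _ _ ⟨i, rfl⟩
    refine core_ne2 _ (x 0) (x 1) (x 2) (x 3) (x 7) (x 6) (x 5) (x 4) ?_ two T S f1 f2 f3 g1 g2 g3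
      _ _ _ _ _ hT hf1 hf2 hf3 hS hg1 hg2 hg3 S0 g10 g20 g30 rfl rfl rfl ?_ ?_ ?_ ?_ rfl rfl
      (mem 0) (mem 1) (mem 2) (mem 3) (mem 4) (mem 5) (mem 6) (mem 7)
    · intro N h0 h1 h2 h3 h7 h6 h5 h4
      apply gen_top
      intro i
      rw [← hx]
      fin_cases i <;> assumption
    · rw [ha, hb]
      intro h
      rw [div_left_inj' D0] at h
      apply mul_ne_zero (pow_ne_zero 2 g30) h21
      linear_combination h
    · rw [ha, hc]
      intro h
      rw [div_left_inj' D0] at h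
      apply mul_ne_zero (pow_ne_zero 2 g20) h31
      linear_combination h
    · rw [hb, hc]
      intro h
      rw [div_left_inj' D0] at h
      apply mul_ne_zero (pow_ne_zero 2 g10) h32
      linear_combination h
    · rw [ha, hb, hc]
      intro h
      apply hQ
      obtain ⟨D, hD⟩ : ∃ D, D = g1 * g2 * g3 * S := ⟨_, rfl⟩
      rw [← hD] at h D0
      field_simp at h
      linear_combination h

theorem case_two (two : (2 : RFF K (Fin 8)) = 0) : IsRatExt K ↥(fixedSub K (Fin 8) G13) := by
  obtain ⟨x, hx⟩ : ∃ x, x = Xvar K (Fin 8) := ⟨_, rfl⟩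
  have hp : ∀ σ i, permHom K (Fin 8) σ (x i) = x (σ i) := by
    intro σ i; rw [hx, permHom_Xvar]
  obtain ⟨s0, hs0⟩ : ∃ s, s = x 0 + x 7 := ⟨_, rfl⟩
  obtain ⟨s1, hs1⟩ : ∃ s, s = x 1 + x 6 := ⟨_, rfl⟩
  obtain ⟨s2, hs2⟩ : ∃ s, s = x 2 + x 5 := ⟨_, rfl⟩
  obtain ⟨s3, hs3⟩ : ∃ s, s = x 3 + x 4 := ⟨_, rfl⟩
  have s00 : s0 ≠ 0 := by rw [hs0, hx]; exact s_ne _ _ (by decide)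
  have s10 : s1 ≠ 0 := by rw [hs1, hx]; exact s_ne _ _ (by decide)
  have s20 : s2 ≠ 0 := by rw [hs2, hx]; exact s_ne _ _ (by decide)
  have s30 : s3 ≠ 0 := by rw [hs3, hx]; exact s_ne _ _ (by decide)
  obtain ⟨z0, hz0⟩ : ∃ z, z = x 0 / s0 := ⟨_, rfl⟩
  obtain ⟨z1, hz1⟩ : ∃ z, z = x 1 / s1 := ⟨_, rfl⟩
  obtain ⟨z2, hz2⟩ : ∃ z, z = x 2 / s2 := ⟨_, rfl⟩
  obtain ⟨z3, hz3⟩ : ∃ z, z = x 3 / s3 := ⟨_, rfl⟩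
  obtain ⟨e0, hQ⟩ := two_nonvanishing two s0 s1 s2 s3 z0 z1 z2 z3 (hx ▸ hs0) (hx ▸ hs1) (hx ▸ hs2)
    (hx ▸ hs3) s00 s10 s20 s30 (hx ▸ hz0) (hx ▸ hz1) (hx ▸ hz2) (hx ▸ hz3)
  have n01 : z0 * (1 + z0) ≠ z1 * (1 + z1) :=
    n_ne 0 1 7 6 (by decide) (by decide) (by decide) (by decide) (by decide) (by decide)
      s0 s1 z0 z1 (hx ▸ hs0) (hx ▸ hs1) s00 s10 (hx ▸ hz0) (hx ▸ hz1)
  have n02 : z0 * (1 + z0) ≠ z2 * (1 + z2) :=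
    n_ne 0 2 7 5 (by decide) (by decide) (by decide) (by decide) (by decide) (by decide)
      s0 s2 z0 z2 (hx ▸ hs0) (hx ▸ hs2) s00 s20 (hx ▸ hz0) (hx ▸ hz2)
  have n03 : z0 * (1 + z0) ≠ z3 * (1 + z3) :=
    n_ne 0 3 7 4 (by decide) (by decide) (by decide) (by decide) (by decide) (by decide)
      s0 s3 z0 z3 (hx ▸ hs0) (hx ▸ hs3) s00 s30 (hx ▸ hz0) (hx ▸ hz3)
  have n12 : z1 * (1 + z1) ≠ z2 * (1 + z2) :=
    n_ne 1 2 6 5 (by decide) (by decide) (by decide) (by decide) (by decide) (by decide)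
      s1 s2 z1 z2 (hx ▸ hs1) (hx ▸ hs2) s10 s20 (hx ▸ hz1) (hx ▸ hz2)
  have n13 : z1 * (1 + z1) ≠ z3 * (1 + z3) :=
    n_ne 1 3 6 4 (by decide) (by decide) (by decide) (by decide) (by decide) (by decide)
      s1 s3 z1 z3 (hx ▸ hs1) (hx ▸ hs3) s10 s30 (hx ▸ hz1) (hx ▸ hz3)
  have n23 : z2 * (1 + z2) ≠ z3 * (1 + z3) :=
    n_ne 2 3 5 4 (by decide) (by decide) (by decide) (by decide) (by decide) (by decide)
      s2 s3 z2 z3 (hx ▸ hs2) (hx ▸ hs3) s20 s30 (hx ▸ hz2) (hx ▸ hz3)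
  have zs : ∀ a b : RFF K (Fin 8), a * (1 + a) ≠ b * (1 + b) → a - b ≠ 0 := by
    intro a b h h'
    exact h (by rw [sub_eq_zero.1 h'])
  have za : ∀ a b : RFF K (Fin 8), a * (1 + a) ≠ b * (1 + b) → a + b ≠ 0 := by
    intro a b h h'
    apply zs a b h
    linear_combination h' - b * two
  obtain ⟨e, he⟩ : ∃ e, e = z0 + z1 + z2 + z3 := ⟨_, rfl⟩
  rw [← he] at e0
  obtain ⟨a1, ha1⟩ : ∃ a, a = (z0 - z1) / e := ⟨_, rfl⟩
  obtain ⟨a2, ha2⟩ : ∃ a, a = (z0 - z2) / e := ⟨_, rfl⟩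
  obtain ⟨a3, ha3⟩ : ∃ a, a = (z0 - z3) / e := ⟨_, rfl⟩
  have A1e : a1 ^ 2 + a1 = (z0 - z1) * (z2 + z3) / e ^ 2 := by
    rw [ha1]; field_simp; rw [he]
    linear_combination (z0 - z1) * z0 * two
  have A2e : a2 ^ 2 + a2 = (z0 - z2) * (z1 + z3) / e ^ 2 := by
    rw [ha2]; field_simp; rw [he]
    linear_combination (z0 - z2) * z0 * two
  have A3e : a1 ^ 2 + a1 + (a2 ^ 2 + a2) = (z0 - z3) * (z1 + z2) / e ^ 2 := by
    rw [A1e, A2e, ← add_div]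
    congr 1
    linear_combination (z0 * z3 - z1 * z2) * two
  refine reduction K (tTwo s0 s1 s2 s3 (z0 * (1 + z0)) (z1 * (1 + z1)) (z2 * (1 + z2))
      (z3 * (1 + z3))
      (z0 * (a1 * a2 * a3) + z1 * (a1 * (a2 + 1) * (a3 + 1)) + z2 * ((a1 + 1) * a2 * (a3 + 1))
        + z3 * ((a1 + 1) * (a2 + 1) * a3)) e (a1 ^ 2 + a1) (a2 ^ 2 + a2)) ?_ ?_ ?_ ?_ ?_
  · refine tTwoX_s1 _ two (x 0) (x 1) (x 2) (x 3) (x 7) (x 6) (x 5) (x 4) s0 s1 s2 s3 z0 z1 z2 z3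
      e a1 a2 a3 hs0 hs1 hs2 hs3 s00 s10 s20 s30 hz0 hz1 hz2 hz3 he e0 ha1 ha2 ha3
      ?_ ?_ ?_ ?_ ?_ ?_ ?_ ?_ <;> rw [hp] <;> congr 1
  · refine tTwoX_s2 _ two (x 0) (x 1) (x 2) (x 3) (x 7) (x 6) (x 5) (x 4) s0 s1 s2 s3 z0 z1 z2 z3
      e a1 a2 a3 hs0 hs1 hs2 hs3 s00 s10 s20 s30 hz0 hz1 hz2 hz3 he e0 ha1 ha2 ha3
      ?_ ?_ ?_ ?_ ?_ ?_ ?_ ?_ <;> rw [hp] <;> congr 1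
  · refine tTwoX_k _ two (x 0) (x 1) (x 2) (x 3) (x 7) (x 6) (x 5) (x 4) s0 s1 s2 s3 z0 z1 z2 z3
      e a1 a2 a3 hs0 hs1 hs2 hs3 s00 s10 s20 s30 hz0 hz1 hz2 hz3 he e0 ha1 ha2 ha3
      ?_ ?_ ?_ ?_ ?_ ?_ ?_ ?_ <;> rw [hp] <;> congr 1
  · refine tTwoX_p _ two (x 0) (x 1) (x 2) (x 3) (x 7) (x 6) (x 5) (x 4) s0 s1 s2 s3 z0 z1 z2 z3
      e a1 a2 a3 hs0 hs1 hs2 hs3 s00 s10 s20 s30 hz0 hz1 hz2 hz3 he e0 ha1 ha2 ha3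
      ?_ ?_ ?_ ?_ ?_ ?_ ?_ ?_ <;> rw [hp] <;> congr 1
  · obtain ⟨t, ht⟩ : ∃ t, t = tTwo s0 s1 s2 s3 (z0 * (1 + z0)) (z1 * (1 + z1)) (z2 * (1 + z2))
      (z3 * (1 + z3))
      (z0 * (a1 * a2 * a3) + z1 * (a1 * (a2 + 1) * (a3 + 1)) + z2 * ((a1 + 1) * a2 * (a3 + 1))
        + z3 * ((a1 + 1) * (a2 + 1) * a3)) e (a1 ^ 2 + a1) (a2 ^ 2 + a2) := ⟨_, rfl⟩
    have mem : ∀ i, t i ∈ IntermediateField.adjoin K (Set.range t) :=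
      fun i => IntermediateField.subset_adjoin _ _ ⟨i, rfl⟩
    rw [ht] at mem
    refine core_two _ (x 0) (x 1) (x 2) (x 3) (x 7) (x 6) (x 5) (x 4) ?_ two s0 s1 s2 s3
      z0 z1 z2 z3 _ _ _ _ e a1 a2 a3 _ _ _ _ _ _ _ _ _ hs0 hs1 hs2 hs3 s00 s10 s20 s30
      hz0 hz1 hz2 hz3 rfl rfl rfl rfl n01 n02 n03 n12 n13 n23 he e0 ha1 ha2 ha3 rfl rfl
      ?_ ?_ ?_ ?_ rfl rfl rfl rfl rfl rfl rfl
      (mem 0) (mem 1) (mem 2) (mem 3) (mem 4) (mem 5) (mem 6) (mem 7)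
    · intro N h0 h1 h2 h3 h7 h6 h5 h4
      apply gen_top
      intro i
      rw [← hx]
      fin_cases i <;> assumption
    · rw [A1e]
      exact div_ne_zero (mul_ne_zero (zs _ _ n01) (za _ _ n23)) (pow_ne_zero 2 e0)
    · rw [A2e]
      exact div_ne_zero (mul_ne_zero (zs _ _ n02) (za _ _ n13)) (pow_ne_zero 2 e0)
    · rw [A3e]
      exact div_ne_zero (mul_ne_zero (zs _ _ n03) (za _ _ n12)) (pow_ne_zero 2 e0)
    · rw [A1e, A2e]
      intro h
      apply hQ
      clear he
      field_simp at h
      linear_combination h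

end Final

/-- **Rationality for `G₁₃`.** Let `K` be any field and `G₁₃ ⊆ S₈` the subgroup of order 24
generated by `σ₁ = (1,2)(3,4)(5,6)(7,8)`, `σ₂ = (1,3)(2,4)(5,7)(6,8)`, `κ = (1,5)(2,6)(3,7)(4,8)`
and `φ₁ = (2,3,4)(7,6,5)` (written here with indices `0,…,7`). Then `K(x₁,…,x₈)^{G₁₃}` is
`K`-rational. -/
theorem rationality_G13 (K : Type) [Field K] :
    IsRatExt K ↥(fixedSub K (Fin 8) (Subgroup.closure
      {Equiv.swap (0 : Fin 8) 1 * Equiv.swap 2 3 * Equiv.swap 4 5 * Equiv.swap 6 7,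
       Equiv.swap (0 : Fin 8) 2 * Equiv.swap 1 3 * Equiv.swap 4 6 * Equiv.swap 5 7,
       Equiv.swap (0 : Fin 8) 4 * Equiv.swap 1 5 * Equiv.swap 2 6 * Equiv.swap 3 7,
       (Equiv.swap (1 : Fin 8) 2 * Equiv.swap 2 3) * (Equiv.swap (6 : Fin 8) 5 * Equiv.swap 5 4)})) := by
  by_cases two : (2 : RFF K (Fin 8)) = 0
  · exact case_two two
  · exact case_odd two
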